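/- arXiv:1409.2333 — 2 statements merged into one kernel-verified Lean document; each statement's English description precedes it below -/
import Mathlib

section
/- Let n be an odd positive integer and let Ψ be the function Ψ(x,y) = (H_n(x) − H_n(y)) exp(−(x²+y²)/2) (equal to √2·Φ^{3π/4}_n up to sign). Then there exist (n−1)/2 pairwise disjoint subsets C_1, …, C_{(n−1)/2} of ℝ², each homeomorphic to the circle S¹ and each disjoint from the diagonal except at its crossing points, such that the nodal set N(Ψ) equals the union of the diagonal {(x,x) : x ∈ ℝ} and C_1 ∪ ⋯ ∪ C_{(n−1)/2}; moreover the union of the C_k meets the diagonal exactly in the n−1 points (t_{n−1,i}, t_{n−1,i}), 1 ≤ i ≤ n−1, and meets the antidiagonal {x + y = 0} exactly in the n−1 points (t_{n,i}, −t_{n,i}) with t_{n,i} ≠ 0. -/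
/-- The physicist's Hermite polynomials: `H 0 = 1`, `H 1 = 2X`,
`H (n+2) = 2X · H (n+1) - 2(n+1) · H n`. -/
noncomputable def H : ℕ → Polynomial ℝ
  | 0 => 1
  | 1 => Polynomial.C 2 * Polynomial.X
  | n + 2 => Polynomial.C 2 * Polynomial.X * H (n + 1) - Polynomial.C (2 * (n + 1) : ℝ) * H n

/-- The function `Ψ(x,y) = (H_n(x) - H_n(y)) e^{-(x²+y²)/2}`, equal up to a constant
to `Φ^{3π/4}_n`. -/
noncomputable def Psi (n : ℕ) : ℝ × ℝ → ℝ := fun p =>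
  ((H n).eval p.1 - (H n).eval p.2) * Real.exp (-(p.1 ^ 2 + p.2 ^ 2) / 2)

open Polynomial in
theorem H_derivative (n : ℕ) :
    derivative (H (n + 1)) = C (2 * (n + 1) : ℝ) * H n ∧
    H (n + 1) = C 2 * X * H n - derivative (H n) := by
  induction n with
  | zero => simp [H]
  | succ k ih =>
    obtain ⟨h1, h2⟩ := ih
    have h3 : H (k + 1 + 1) = C 2 * X * H (k + 1) - derivative (H (k + 1)) := by
      rw [h1]; rw [H]
    refine ⟨?_, h3⟩
    rw [show H (k + 1 + 1) = C 2 * X * H (k + 1) - C (2 * (k + 1) : ℝ) * H k from by rw [H]]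
    have h4 : derivative (H k) = C 2 * X * H k - H (k + 1) := by rw [h2]; ring
    simp only [derivative_sub, derivative_mul, derivative_C, derivative_X, h1, h4]
    simp only [map_mul, map_add, map_one, map_natCast, Nat.cast_add, Nat.cast_one]
    ring

open Polynomial in
theorem H_ode (n : ℕ) : derivative (derivative (H (n + 1))) =
    C 2 * X * derivative (H (n + 1)) - C (2 * (n + 1) : ℝ) * H (n + 1) := by
  obtain ⟨h1, h2⟩ := H_derivative n
  have h4 : derivative (H n) = C 2 * X * H n - H (n + 1) := by rw [h2]; ring
  simp only [derivative_mul, derivative_C, h1, h4]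
  ring

theorem H_parity (n : ℕ) (x : ℝ) : (H n).eval (-x) = (-1) ^ n * (H n).eval x := by
  induction n using Nat.twoStepInduction with
  | zero => simp [H]
  | one => simp [H]
  | more k h1 h2 => simp only [H, Polynomial.eval_sub, Polynomial.eval_mul, Polynomial.eval_C,
      Polynomial.eval_X, h1, h2]; ring

theorem H_deg (n : ℕ) : (H n).natDegree ≤ n ∧ (H n).coeff n = 2 ^ n := by
  induction n using Nat.twoStepInduction with
  | zero => simp [H]
  | one => 
    simp only [H]
    constructor
    · compute_degree
    · simp
  | more k h1 h2 =>
    obtain ⟨a1, b1⟩ := h1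
    obtain ⟨a2, b2⟩ := h2
    simp only [H]
    constructor
    · compute_degree; omega
    · have : (H k).coeff (k + 2) = 0 := Polynomial.coeff_eq_zero_of_natDegree_lt (by omega)
      simp only [Polynomial.coeff_sub, mul_assoc, Polynomial.coeff_C_mul, Polynomial.coeff_X_mul, this, b2]
      ring

theorem H_tendsto (n : ℕ) (hn : 0 < n) :
    Filter.Tendsto (fun x => (H n).eval x) Filter.atTop Filter.atTop := by
  obtain ⟨a, b⟩ := H_deg n
  have hd : (H n).natDegree = n := le_antisymm a
    (Polynomial.le_natDegree_of_ne_zero (by rw [b]; positivity))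
  apply Polynomial.tendsto_atTop_of_leadingCoeff_nonneg
  · rw [← Polynomial.natDegree_pos_iff_degree_pos]; omega
  · rw [Polynomial.leadingCoeff, hd, b]; positivity

theorem exists_divdiff (p : Polynomial ℝ) : ∃ F : ℝ × ℝ → ℝ, Continuous F ∧
    (∀ x y, (x - y) * F (x, y) = p.eval x - p.eval y) ∧
    ∀ x, F (x, x) = p.derivative.eval x := by
  induction p using Polynomial.induction_on' with
  | add p q hp hq =>
    obtain ⟨F, a, b, c⟩ := hp
    obtain ⟨G, a', b', c'⟩ := hq
    refine ⟨fun z => F z + G z, by fun_prop, fun x y => ?_, fun x => ?_⟩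
    · simp only [mul_add, b, b', Polynomial.eval_add]; ring
    · simp [c, c']
  | monomial n a =>
    refine ⟨fun z => a * ∑ i ∈ Finset.range n, z.1 ^ i * z.2 ^ (n - 1 - i), by fun_prop,
      fun x y => ?_, fun x => ?_⟩
    · have := (Commute.all x y).geom_sum₂_mul n
      simp only [Polynomial.eval_monomial]
      linear_combination a * this
    · simp only [Polynomial.derivative_monomial, Polynomial.eval_monomial]
      have : ∀ i ∈ Finset.range n, x ^ i * x ^ (n - 1 - i) = x ^ (n - 1) := by
        intro i hi
        rw [← pow_add]; congr 1
        have := Finset.mem_range.1 hi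
        omega
      rw [Finset.sum_congr rfl this]; simp; ring

/-- circle lemma -/
theorem circle_homeo (ρ : ℝ × ℝ → ℝ) (hc : ContinuousOn ρ {u | ‖u‖ = 1})
    (hp : ∀ u, ‖u‖ = 1 → 0 < ρ u) :
    Nonempty ({p : ℝ × ℝ | ∃ u : ℝ × ℝ, ‖u‖ = 1 ∧ p = ρ u • u} ≃ₜ
      Metric.sphere (0 : EuclideanSpace ℝ (Fin 2)) 1) := by
  let w : Metric.sphere (0 : EuclideanSpace ℝ (Fin 2)) 1 → ℝ × ℝ := fun v => (v.1 0, v.1 1)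
  have hw0 : ∀ v, w v ≠ 0 := by
    intro v h
    have h0 : v.1 0 = 0 := congrArg Prod.fst h
    have h1 : v.1 1 = 0 := congrArg Prod.snd h
    have : v.1 = 0 := by ext i; fin_cases i <;> simp [h0, h1]
    have h2 := v.2
    rw [this] at h2
    simp at h2
  have hwc : Continuous w := by fun_prop
  let W : Metric.sphere (0 : EuclideanSpace ℝ (Fin 2)) 1 → ℝ × ℝ := fun v => ‖w v‖⁻¹ • w v
  have hW1 : ∀ v, ‖W v‖ = 1 := fun v => norm_smul_inv_norm (𝕜 := ℝ) (hw0 v)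
  have hWc : Continuous W := by
    exact (hwc.norm.inv₀ (fun v => norm_ne_zero_iff.2 (hw0 v))).smul hwc
  have hnorm : ∀ v : Metric.sphere (0 : EuclideanSpace ℝ (Fin 2)) 1, (w v).1 ^ 2 + (w v).2 ^ 2 = 1 := by
    intro v
    have := v.2
    rw [mem_sphere_zero_iff_norm, EuclideanSpace.norm_eq, Real.sqrt_eq_one] at this
    simpa [Fin.sum_univ_two] using this
  let f : Metric.sphere (0 : EuclideanSpace ℝ (Fin 2)) 1 →
    {p : ℝ × ℝ | ∃ u : ℝ × ℝ, ‖u‖ = 1 ∧ p = ρ u • u} := fun v => ⟨ρ (W v) • W v, W v, hW1 v, rfl⟩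
  have hfc : Continuous f := by
    apply Continuous.subtype_mk
    exact (hc.comp_continuous hWc hW1).smul hWc
  have hinj : Function.Injective f := by
    intro v v' h
    have h : ρ (W v) • W v = ρ (W v') • W v' := congrArg Subtype.val h
    have e1 : w v = (ρ (W v) * ‖w v‖⁻¹)⁻¹ • (ρ (W v') * ‖w v'‖⁻¹) • w v' := by
      rw [mul_smul (ρ (W v')), show ‖w v'‖⁻¹ • w v' = W v' from rfl, ← h, 
        show W v = ‖w v‖⁻¹ • w v from rfl, smul_smul (ρ _), smul_smul, inv_mul_cancel₀, one_smul]
      exact mul_ne_zero (hp _ (hW1 v)).ne' (inv_ne_zero (norm_ne_zero_iff.2 (hw0 v)))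
    rw [smul_smul] at e1
    have hpos : 0 < (ρ (W v) * ‖w v‖⁻¹)⁻¹ * (ρ (W v') * ‖w v'‖⁻¹) := by
      have a1 := hp _ (hW1 v)
      have a2 := hp _ (hW1 v')
      have a3 := norm_pos_iff.2 (hw0 v)
      have a4 := norm_pos_iff.2 (hw0 v')
      positivity
    generalize (ρ (W v) * ‖w v‖⁻¹)⁻¹ * (ρ (W v') * ‖w v'‖⁻¹) = c at e1 hpos
    have n1 := hnorm v
    have n2 := hnorm v'
    rw [e1] at n1
    simp only [Prod.smul_fst, Prod.smul_snd, smul_eq_mul] at n1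
    have hc2 : c ^ 2 = 1 := by linear_combination n1 - c ^ 2 * n2
    have hc1 : c = 1 := by nlinarith
    rw [hc1, one_smul] at e1
    have h0 : v.1 0 = v'.1 0 := congrArg Prod.fst e1
    have h1 : v.1 1 = v'.1 1 := congrArg Prod.snd e1
    apply Subtype.ext
    ext i; fin_cases i <;> simp [h0, h1]
  have hsurj : Function.Surjective f := by
    rintro ⟨p, u, hu, rfl⟩
    have hu0 : u ≠ 0 := by rintro rfl; simp at hu
    set z : EuclideanSpace ℝ (Fin 2) := !₂[u.1, u.2] with hz
    have hz0 : z ≠ 0 := by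
      intro h
      apply hu0
      have h0 : z 0 = 0 := by rw [h]; rfl
      have h1 : z 1 = 0 := by rw [h]; rfl
      exact Prod.ext (by simpa [hz] using h0) (by simpa [hz] using h1)
    have hzn := norm_pos_iff.2 hz0
    refine ⟨⟨‖z‖⁻¹ • z, ?_⟩, ?_⟩
    · rw [mem_sphere_zero_iff_norm]; exact norm_smul_inv_norm (𝕜 := ℝ) hz0
    · have hww : w ⟨‖z‖⁻¹ • z, by rw [mem_sphere_zero_iff_norm]; exact norm_smul_inv_norm (𝕜 := ℝ) hz0⟩ = ‖z‖⁻¹ • u := by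
        apply Prod.ext <;> simp [w, hz]
      have hWW : W ⟨‖z‖⁻¹ • z, by rw [mem_sphere_zero_iff_norm]; exact norm_smul_inv_norm (𝕜 := ℝ) hz0⟩ = u := by
        simp only [W]
        rw [hww, norm_smul, hu, smul_smul]
        simp [hzn.ne']
      apply Subtype.ext
      simp only [f]
      rw [hWW]
  exact ⟨(Continuous.homeoOfEquivCompactToT2 (f := Equiv.ofBijective f ⟨hinj, hsurj⟩) hfc).symm⟩

/-- continuity of the radial function -/
theorem radial_cont (F : ℝ × ℝ → ℝ) (hF : Continuous F) (ρ : ℝ × ℝ → ℝ) (a b σ : ℝ)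
    (h1 : ∀ u, ‖u‖ = 1 → a ≤ ρ u) (h2 : ∀ u, ‖u‖ = 1 → ρ u < b)
    (h3 : ∀ u, ‖u‖ = 1 → ∀ x, ρ u < x → x < b → 0 < σ * F (x • u))
    (h4 : ∀ u, ‖u‖ = 1 → ∀ x, a ≤ x → x < ρ u → σ * F (x • u) < 0) :
    ContinuousOn ρ {u | ‖u‖ = 1} := by
  intro u hu
  have hu : ‖u‖ = 1 := hu
  have hcont : ∀ x : ℝ, Continuous (fun u : ℝ × ℝ => σ * F (x • u)) := fun x => by fun_prop
  have hev : ∀ᶠ v in nhdsWithin u {u | ‖u‖ = 1}, ‖v‖ = 1 := self_mem_nhdsWithin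
  refine tendsto_order.2 ⟨fun y hy => ?_, fun y hy => ?_⟩
  · by_cases hya : y < a
    · filter_upwards [hev] with v hv
      exact lt_of_lt_of_le hya (h1 v hv)
    · push Not at hya
      obtain ⟨z, hz1, hz2⟩ := exists_between hy
      have := h4 u hu z (hya.trans hz1.le) hz2
      have := ((hcont z).tendsto u).eventually_lt_const this
      filter_upwards [hev, nhdsWithin_le_nhds this] with v hv hv'
      by_contra hcon
      push Not at hcon
      exact absurd (h3 v hv z (by linarith) (hz2.trans (h2 u hu))) (by linarith)
  · obtain ⟨z, hz1, hz2⟩ := exists_between (lt_min hy (h2 u hu))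
    have hzy := hz2.trans_le (min_le_left _ _)
    have hzb := hz2.trans_le (min_le_right _ _)
    have := h3 u hu z hz1 hzb
    have := ((hcont z).tendsto u).eventually_const_lt this
    filter_upwards [hev, nhdsWithin_le_nhds this] with v hv hv'
    by_contra hcon
    push Not at hcon
    exact absurd (h4 v hv z ((h1 u hu).trans hz1.le) (by linarith)) (by linarith)

theorem sign_const (g : ℝ → ℝ) (hg : Continuous g) (x y : ℝ)
    (h : ∀ z ∈ Set.uIcc x y, g z ≠ 0) : 0 < g x * g y := by
  by_contra hcon
  push Not at hcon
  have h0 : (0 : ℝ) ∈ Set.uIcc (g x) (g y) := by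
    rw [Set.mem_uIcc]
    rcases mul_nonpos_iff.1 hcon with h | h
    · exact Or.inr ⟨h.2, h.1⟩
    · exact Or.inl h
  obtain ⟨z, hz, hz0⟩ := intermediate_value_uIcc hg.continuousOn h0
  exact h z hz hz0

theorem slope_right (g : ℝ → ℝ) (d a b : ℝ) (hab : a < b) (hd : HasDerivAt g d a) (ha : g a = 0)
    (h : ∀ x, a < x → x < b → 0 ≤ g x) : 0 ≤ d := by
  have h1 := (hasDerivAt_iff_tendsto_slope.1 hd).mono_left
    (nhdsWithin_mono a (show Set.Ioi a ⊆ {a}ᶜ from fun x hx => (Set.mem_Ioi.1 hx).ne'))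
  refine ge_of_tendsto h1 ?_
  filter_upwards [Ioo_mem_nhdsGT hab] with x hx
  rw [slope_def_field, ha, sub_zero]
  exact div_nonneg (h x hx.1 hx.2) (by linarith [hx.1])

theorem slope_left (g : ℝ → ℝ) (d a b : ℝ) (hab : a < b) (hd : HasDerivAt g d b) (ha : g b = 0)
    (h : ∀ x, a < x → x < b → 0 ≤ g x) : d ≤ 0 := by
  have := slope_right (fun x => g (-x)) (-d) (-b) (-a) (by linarith)
    (by
      have h1 : HasDerivAt g d (-(-b)) := by rwa [neg_neg]
      have := h1.scomp (-b) (hasDerivAt_neg (-b))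
      simpa [Function.comp_def] using this) (by simpa using ha)
    (fun x h1 h2 => h (-x) (by linarith) (by linarith))
  linarith

section
open Polynomial

theorem sonin (p : ℝ[X]) (N : ℝ) (hN : 0 < N) (hodd : ∀ x, p.eval (-x) = - p.eval x)
    (hode : derivative (derivative p) = C 2 * X * derivative p - C N * p)
    (hp' : derivative p ≠ 0) (c s : ℝ) (hc : (derivative p).eval c = 0)
    (hs : |s| < c) : p.eval s ^ 2 < p.eval c ^ 2 := by
  set f : ℝ[X] := C N * p ^ 2 + (derivative p) ^ 2 with hf
  have hf' : derivative f = C 4 * X * (derivative p) ^ 2 := by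
    simp only [hf, derivative_add, derivative_mul, derivative_C, derivative_pow, hode]
    simp only [Nat.cast_ofNat, map_ofNat]
    ring
  have hmono : MonotoneOn (fun x => f.eval x) (Set.Ici 0) := by
    apply monotoneOn_of_deriv_nonneg (convex_Ici 0) f.continuous.continuousOn
      f.differentiable.differentiableOn
    intro x hx
    rw [interior_Ici] at hx
    have hx : 0 < x := hx
    rw [Polynomial.deriv, hf']
    simp only [eval_mul, eval_C, eval_X, eval_pow]
    positivity
  have hs0 := abs_nonneg s
  have hle := hmono (Set.mem_Ici.2 hs0) (Set.mem_Ici.2 (hs0.trans hs.le)) hs.le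
  have hlt : f.eval |s| < f.eval c := by
    refine lt_of_le_of_ne hle fun heq => ?_
    have : f = C (f.eval c) := by
      apply Polynomial.eq_of_infinite_eval_eq
      apply (Set.Ioo_infinite hs).mono
      intro x hx
      have h1 := hmono (Set.mem_Ici.2 hs0) (Set.mem_Ici.2 (hs0.trans hx.1.le)) hx.1.le
      have h2 := hmono (Set.mem_Ici.2 (hs0.trans hx.1.le)) (Set.mem_Ici.2 (hs0.trans hs.le)) hx.2.le
      simp only at h1 h2
      simp only [Set.mem_ofPred_eq, eval_C]
      linarith
    rw [this, derivative_C] at hf'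
    have h4 : (C 4 : ℝ[X]) ≠ 0 := by simp
    exact (mul_ne_zero (mul_ne_zero h4 X_ne_zero) (pow_ne_zero 2 hp')) hf'.symm
  have hsq : p.eval |s| ^ 2 = p.eval s ^ 2 := by
    rcases abs_choice s with h | h <;> rw [h]
    rw [hodd]; ring
  simp only [hf, eval_add, eval_mul, eval_C, eval_pow, hc, hsq] at hlt
  nlinarith [sq_nonneg ((derivative p).eval |s|)]

theorem alt_aux (p : ℝ[X]) (N : ℝ) (hN : 0 < N)
    (hode : derivative (derivative p) = C 2 * X * derivative p - C N * p)
    (a b : ℝ) (hab : a < b) (h : ∀ x, a < x → x < b → 0 ≤ (derivative p).eval x) :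
    ((derivative p).eval a = 0 → p.eval a ≤ 0) ∧ ((derivative p).eval b = 0 → 0 ≤ p.eval b) := by
  constructor
  · intro ha
    have := slope_right _ _ a b hab ((derivative p).hasDerivAt a) ha h
    rw [hode] at this
    simp [ha] at this
    nlinarith
  · intro hb
    have := slope_left _ _ a b hab ((derivative p).hasDerivAt b) hb h
    rw [hode] at this
    simp [hb] at this
    nlinarith

theorem alt (p : ℝ[X]) (N : ℝ) (hN : 0 < N)
    (hode : derivative (derivative p) = C 2 * X * derivative p - C N * p)
    (a b : ℝ) (hab : a < b) (h : ∀ x, a < x → x < b → (derivative p).eval x ≠ 0)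
    (ha : (derivative p).eval a = 0) (hb : (derivative p).eval b = 0)
    (ha' : p.eval a ≠ 0) (hb' : p.eval b ≠ 0) : p.eval a * p.eval b < 0 := by
  obtain ⟨z, hz1, hz2⟩ := exists_between hab
  have key : ∀ x, a < x → x < b → 0 < (derivative p).eval z * (derivative p).eval x := by
    intro x hx1 hx2
    apply sign_const (fun x => (derivative p).eval x) (derivative p).continuous
    intro w hw
    rcases Set.mem_uIcc.1 hw with hw | hw
    · exact h w (by linarith) (by linarith)
    · exact h w (by linarith) (by linarith)
  rcases lt_or_gt_of_ne (h z hz1 hz2) with hz | hz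
  · obtain ⟨h1, h2⟩ := alt_aux (-p) N hN (by simp only [derivative_neg, hode]; ring) a b hab
      (fun x hx1 hx2 => by
        have := key x hx1 hx2
        simp only [derivative_neg, eval_neg]; nlinarith)
    simp only [derivative_neg, eval_neg, neg_eq_zero] at h1 h2
    have h1 := lt_of_le_of_ne (h1 ha) (by simpa using ha')
    have h2 := lt_of_le_of_ne (h2 hb) (by simpa using hb')
    nlinarith
  · obtain ⟨h1, h2⟩ := alt_aux p N hN hode a b hab
      (fun x hx1 hx2 => by
        have := key x hx1 hx2
        nlinarith)
    have h1 := lt_of_le_of_ne (h1 ha) (by simpa using ha')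
    have h2 := lt_of_le_of_ne (h2 hb) (by simpa using hb'.symm)
    nlinarith

theorem exists_e (m : ℕ) (hm : 0 < m) (p : ℝ[X]) (N : ℝ) (hN : 0 < N)
    (hodd : ∀ x, p.eval (-x) = - p.eval x)
    (hode : derivative (derivative p) = C 2 * X * derivative p - C N * p)
    (htend : Filter.Tendsto (fun x => p.eval x) Filter.atTop Filter.atTop)
    (c : ℕ → ℝ) (hcpos : ∀ k < m, 0 < c k) (hcm : ∀ k, k + 1 < m → c k < c (k + 1))
    (hz : ∀ x, 0 < x → ((derivative p).eval x = 0 ↔ ∃ k < m, x = c k)) :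
    ∃ e : ℕ → ℝ, StrictMono e ∧ (∀ k < m, e k = c k) ∧ (∀ k, 0 < e k) ∧
      (∀ k < m, p.eval (e k) * p.eval (e (k + 1)) < 0) ∧
      ∀ k ≤ m, ∀ s, |s| ≤ e k → s ≠ e k → 0 < p.eval (e k) * (p.eval (e k) - p.eval s) := by
  have hp' : derivative p ≠ 0 := by
    intro h
    have h1 := derivative_eq_zero.1 h
    rw [natDegree_eq_zero] at h1
    obtain ⟨a, rfl⟩ := h1
    simp only [eval_C] at htend
    exact Filter.not_tendsto_const_atTop a Filter.atTop htend
  have hcz : ∀ k < m, (derivative p).eval (c k) = 0 := fun k hk => (hz _ (hcpos k hk)).2 ⟨k, hk, rfl⟩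
  have hson : ∀ k < m, ∀ s, |s| < c k → p.eval s ^ 2 < p.eval (c k) ^ 2 := fun k hk s hs =>
    sonin p N hN hodd hode hp' (c k) s (hcz k hk) hs
  have hcne : ∀ k < m, p.eval (c k) ≠ 0 := by
    intro k hk h
    have := hson k hk 0 (by simpa using hcpos k hk)
    rw [h] at this
    nlinarith [sq_nonneg (p.eval 0)]
  have hcmono : ∀ j k, j < k → k < m → c j < c k := by
    intro j k hjk
    induction k, hjk using Nat.le_induction with
    | base => exact fun h => hcm j h
    | succ k hk ih => exact fun h => (ih (by omega)).trans (hcm k h)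
  -- last point
  set L := c (m - 1) with hL
  have hL0 : 0 < L := hcpos _ (by omega)
  have hnz : ∀ x, L < x → (derivative p).eval x ≠ 0 := by
    intro x hx h
    obtain ⟨k, hk, rfl⟩ := (hz x (by linarith)).1 h
    rcases Nat.lt_or_ge k (m - 1) with h | h
    · linarith [hcmono k (m - 1) h (by omega)]
    · rw [show k = m - 1 by omega] at hx; exact lt_irrefl _ hx
  obtain ⟨R, hR1, hR2⟩ : ∃ R, L < R ∧ |p.eval L| < p.eval R :=
    ((Filter.eventually_gt_atTop L).and (htend.eventually_gt_atTop _)).exists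
  have hpos : ∀ x, L < x → 0 < (derivative p).eval x := by
    obtain ⟨z, hz, hz'⟩ := exists_deriv_eq_slope (fun x => p.eval x) hR1 p.continuous.continuousOn
      p.differentiable.differentiableOn
    rw [Polynomial.deriv] at hz'
    have h0 : 0 < (derivative p).eval z := by
      rw [hz']
      apply div_pos _ (by linarith)
      linarith [le_abs_self (p.eval L)]
    intro x hx
    have := sign_const (fun x => (derivative p).eval x) (derivative p).continuous z x (by
      intro w hw
      apply hnz
      rcases Set.mem_uIcc.1 hw with hw | hw
      · linarith [hz.1]
      · linarith [hz.1])
    nlinarith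
  have hLneg : p.eval L < 0 := lt_of_le_of_ne
    ((alt_aux p N hN hode L R hR1 (fun x hx _ => (hpos x hx).le)).1 (hcz _ (by omega)))
    (hcne _ (by omega))
  have hsm : StrictMonoOn (fun x => p.eval x) (Set.Ici L) := by
    apply strictMonoOn_of_deriv_pos (convex_Ici L) p.continuous.continuousOn
    intro x hx
    rw [interior_Ici] at hx
    rw [Polynomial.deriv]
    exact hpos x hx
  refine ⟨fun k => if k < m then c k else R + (k - m : ℕ), ?_, ?_, ?_, ?_, ?_⟩
  · apply strictMono_nat_of_lt_succ
    intro k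
    by_cases h1 : k + 1 < m
    · simp only [h1, show k < m by omega, if_true]; exact hcm k h1
    · by_cases h2 : k < m
      · simp only [h1, h2, if_true, if_false]
        have : k = m - 1 := by omega
        rw [this, ← hL]
        have : (0 : ℝ) ≤ ((m - 1 + 1 - m : ℕ) : ℝ) := Nat.cast_nonneg _
        linarith
      · simp only [h1, h2, if_false]
        have : k + 1 - m = (k - m) + 1 := by omega
        rw [this]; push_cast; linarith
  · intro k hk; simp [hk]
  · intro k
    simp only
    split_ifs with h
    · exact hcpos k h
    · have : (0 : ℝ) ≤ ((k - m : ℕ) : ℝ) := Nat.cast_nonneg _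
      linarith
  · intro k hk
    by_cases h1 : k + 1 < m
    · simp only [h1, hk, if_true]
      apply alt p N hN hode _ _ (hcm k h1) _ (hcz k hk) (hcz _ h1) (hcne k hk) (hcne _ h1)
      intro x hx1 hx2 hx
      obtain ⟨j, hj, rfl⟩ := (hz x (by linarith [hcpos k hk])).1 hx
      rcases Nat.lt_trichotomy j k with h | h | h
      · linarith [hcmono j k h hk]
      · rw [h] at hx1; exact lt_irrefl _ hx1
      · rcases Nat.lt_or_ge (k + 1) j with h' | h'
        · linarith [hcmono (k + 1) j h' hj]
        · rw [show j = k + 1 by omega] at hx2; exact lt_irrefl _ hx2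
    · simp only [h1, hk, if_true, if_false]
      have : k = m - 1 := by omega
      rw [this, ← hL]
      simp only [show m - 1 + 1 - m = 0 by omega, Nat.cast_zero, add_zero]
      have := abs_nonneg (p.eval L)
      nlinarith
  · intro k hk s hs hs'
    by_cases h1 : k < m
    · simp only [h1, if_true] at hs hs' ⊢
      have hne := hcne k h1
      have hsq : 0 < p.eval (c k) ^ 2 := by positivity
      by_cases h2 : s = - c k
      · rw [h2, hodd]; nlinarith
      · have h3 : |s| < c k := by
          refine lt_of_le_of_ne hs fun h => ?_
          rcases (abs_eq (hcpos k h1).le).1 h with h | h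
          · exact hs' h
          · exact h2 h
        have := hson k h1 s h3
        nlinarith [sq_nonneg (p.eval (c k) - p.eval s)]
    · have : k = m := by omega
      subst this
      simp only [lt_irrefl, if_false, Nat.sub_self, Nat.cast_zero, add_zero] at hs hs' ⊢
      have hRp : 0 < p.eval R := lt_of_le_of_lt (abs_nonneg _) hR2
      apply mul_pos hRp
      rw [abs_le] at hs
      rw [abs_of_neg hLneg] at hR2
      by_cases h2 : L ≤ s
      · have : p.eval s < p.eval R := hsm (Set.mem_Ici.2 h2) (Set.mem_Ici.2 hR1.le) (lt_of_le_of_ne hs.2 hs')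
        linarith
      · by_cases h3 : s ≤ -L
        · have : p.eval L ≤ p.eval (-s) := hsm.monotoneOn (Set.mem_Ici.2 le_rfl) (Set.mem_Ici.2 (by linarith)) (by linarith)
          rw [hodd] at this
          linarith
        · have := hson (k - 1) (by omega) s (abs_lt.2 ⟨by rw [← hL]; linarith, by rw [← hL]; linarith⟩)
          rw [← hL] at this
          nlinarith

theorem count (p : ℝ[X]) (m : ℕ) (hdeg : p.natDegree ≤ 2 * m + 1) (hodd : ∀ x, p.eval (-x) = - p.eval x)
    (b : ℝ) (x₀ : ℝ) (hx₀ : p.eval x₀ - p.eval (x₀ * b) ≠ 0) (S : Finset ℝ)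
    (hS : ∀ x ∈ S, 0 < x ∧ p.eval x - p.eval (x * b) = 0) : S.card ≤ m := by
  set Q : ℝ[X] := p - p.comp (C b * X) with hQ
  have hQe : ∀ x, Q.eval x = p.eval x - p.eval (x * b) := by
    intro x
    simp only [hQ, eval_sub, eval_comp, eval_mul, eval_C, eval_X, mul_comm b]
  have hQ0 : Q ≠ 0 := by
    intro h
    apply hx₀
    rw [← hQe, h, eval_zero]
  have hQd : Q.natDegree ≤ 2 * m + 1 := by
    apply (natDegree_sub_le _ _).trans
    apply max_le hdeg
    refine natDegree_comp_le.trans ?_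
    have : (C b * X : ℝ[X]).natDegree ≤ 1 := by compute_degree
    nlinarith
  have hQr : ∀ x, Q.eval x = 0 → x ∈ Q.roots.toFinset := by
    intro x hx
    rw [Multiset.mem_toFinset, mem_roots hQ0]
    exact hx
  have h0 : p.eval 0 = 0 := by
    have := hodd 0
    rw [neg_zero] at this
    linarith
  have hdisj : Disjoint S (S.image (fun x => -x)) := by
    rw [Finset.disjoint_left]
    intro x hx hx'
    obtain ⟨y, hy, rfl⟩ := Finset.mem_image.1 hx'
    linarith [(hS _ hx).1, (hS _ hy).1]
  have hni : (0 : ℝ) ∉ S ∪ S.image (fun x => -x) := by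
    rw [Finset.mem_union, not_or]
    constructor
    · intro h; exact lt_irrefl _ (hS _ h).1
    · intro h
      obtain ⟨y, hy, hy0⟩ := Finset.mem_image.1 h
      linarith [(hS _ hy).1]
  have hsub : insert 0 (S ∪ S.image (fun x => -x)) ⊆ Q.roots.toFinset := by
    intro x hx
    apply hQr
    rw [hQe]
    rcases Finset.mem_insert.1 hx with rfl | hx
    · simp
    · rcases Finset.mem_union.1 hx with hx | hx
      · exact (hS x hx).2
      · obtain ⟨y, hy, rfl⟩ := Finset.mem_image.1 hx
        have := (hS y hy).2
        rw [hodd, neg_mul, hodd]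
        linarith
  have hcard := Finset.card_le_card hsub
  rw [Finset.card_insert_of_notMem hni, Finset.card_union_of_disjoint hdisj,
    Finset.card_image_of_injective _ neg_injective] at hcard
  have := (Multiset.toFinset_card_le Q.roots).trans (card_roots' Q)
  omega

theorem ray (m : ℕ) (hm : 0 < m) (p : ℝ[X]) (hdeg : p.natDegree ≤ 2 * m + 1)
    (hodd : ∀ x, p.eval (-x) = - p.eval x)
    (e : ℕ → ℝ) (hmono : StrictMono e) (hpos : ∀ k, 0 < e k)
    (hz : ∀ x, 0 < x → ((derivative p).eval x = 0 ↔ ∃ k < m, x = e k))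
    (halt : ∀ k < m, p.eval (e k) * p.eval (e (k + 1)) < 0)
    (hdom : ∀ k ≤ m, ∀ s, |s| ≤ e k → s ≠ e k → 0 < p.eval (e k) * (p.eval (e k) - p.eval s))
    (b : ℝ) (hb : |b| ≤ 1) (G : ℝ → ℝ) (hG : Continuous G)
    (h1 : b = 1 → ∀ x, G x = (derivative p).eval x)
    (h2 : ∀ x, x * (1 - b) * G x = p.eval x - p.eval (x * b)) :
    ∃ r : Fin m → ℝ, (∀ k : Fin m, e k ≤ r k ∧ r k < e (k + 1) ∧ G (r k) = 0 ∧
      (∀ x, r k < x → x < e (k + 1) → 0 < p.eval (e (k + 1)) * G x) ∧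
      (∀ x, e k ≤ x → x < r k → p.eval (e (k + 1)) * G x < 0)) ∧
      ∀ x, 0 < x → G x = 0 → ∃ k, x = r k := by
  by_cases hb1 : b = 1
  · have h1 := h1 hb1
    refine ⟨fun k => e k, fun k => ⟨le_rfl, hmono (Nat.lt_succ_self _), ?_, ?_, ?_⟩, ?_⟩
    · rw [h1]; exact (hz _ (hpos _)).2 ⟨k, k.2, rfl⟩
    · intro x hx1 hx2
      have hlt : e k < e (k + 1) := hmono (Nat.lt_succ_self _)
      obtain ⟨z, hz1, hz2⟩ := exists_deriv_eq_slope (fun x => p.eval x) hlt p.continuous.continuousOn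
        p.differentiable.differentiableOn
      rw [Polynomial.deriv] at hz2
      have hne : e (k + 1) - e k ≠ 0 := by linarith
      rw [eq_div_iff hne] at hz2
      have hs := sign_const (fun x => (derivative p).eval x) (derivative p).continuous z x (by
        intro w hw h0
        have hw' : e k < w ∧ w < e (k + 1) := by
          rcases Set.mem_uIcc.1 hw with hw | hw
          · exact ⟨by linarith [hz1.1], by linarith⟩
          · exact ⟨by linarith, by linarith [hz1.2]⟩
        obtain ⟨j, hj, rfl⟩ := (hz w (by linarith [hpos k])).1 h0
        have a1 := hmono.lt_iff_lt.1 hw'.1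
        have a2 := hmono.lt_iff_lt.1 hw'.2
        omega)
      have ha := halt k k.2
      rw [h1]
      have hA : 0 < p.eval (e (k + 1)) * (eval z (derivative p) * (e (k + 1) - e k)) := by
        rw [hz2]; nlinarith [sq_nonneg (p.eval (e (k + 1)))]
      rw [← mul_assoc] at hA
      have hB := pos_of_mul_pos_left hA (by linarith)
      have hC : 0 < (eval z (derivative p)) ^ 2 * (p.eval (e (k + 1)) * eval x (derivative p)) := by
        have := mul_pos hB hs
        nlinarith
      exact pos_of_mul_pos_right hC (sq_nonneg _)
    · intro x hx1 hx2; linarith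
    · intro x hx h0
      rw [h1] at h0
      obtain ⟨k, hk, rfl⟩ := (hz x hx).1 h0
      exact ⟨⟨k, hk⟩, rfl⟩
  · have hb2 : 0 < 1 - b := by
      have := lt_of_le_of_ne ((le_abs_self b).trans hb) hb1
      linarith
    have hval : ∀ k ≤ m, 0 < p.eval (e k) * G (e k) := by
      intro k hk
      have a1 : |e k * b| ≤ e k := by
        rw [abs_mul, abs_of_pos (hpos k)]
        nlinarith [hpos k]
      have a2 : e k * b ≠ e k := by
        intro h
        have : e k * (1 - b) = 0 := by linarith
        exact (mul_pos (hpos k) hb2).ne' this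
      have a3 := hdom k hk _ a1 a2
      rw [← h2] at a3
      have : 0 < (e k * (1 - b)) * (p.eval (e k) * G (e k)) := by linarith
      exact pos_of_mul_pos_right this (mul_pos (hpos k) hb2).le
    have hex : ∀ k : Fin m, ∃ x, e k < x ∧ x < e (k + 1) ∧ G x = 0 := by
      intro k
      by_contra hcon
      push Not at hcon
      have v1 := hval k k.2.le
      have v2 := hval (k + 1) k.2
      have hlt : e k < e (k + 1) := hmono (Nat.lt_succ_self _)
      have hs := sign_const G hG (e k) (e (k + 1)) (by
        intro w hw h0
        rw [Set.uIcc_of_le hlt.le] at hw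
        rcases hw.1.lt_or_eq with h | h
        · rcases hw.2.lt_or_eq with h' | h'
          · exact hcon w h h' h0
          · rw [← h', h0] at v2; simp at v2
        · rw [h, h0] at v1; simp at v1)
      have ha := halt k k.2
      have := mul_pos v1 v2
      nlinarith
    choose r hr1 hr2 hr3 using hex
    have hrinj : Function.Injective r := by
      intro i j hij
      have a1 := hmono.lt_iff_lt.1 ((hr1 i).trans (hij ▸ hr2 j))
      have a2 := hmono.lt_iff_lt.1 ((hr1 j).trans (hij ▸ hr2 i))
      apply Fin.ext; omega
    have hall : ∀ x, 0 < x → G x = 0 → ∃ k, x = r k := by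
      intro x hx h0
      by_contra hcon
      push Not at hcon
      have hni : x ∉ Finset.univ.image r := by
        intro h
        obtain ⟨k, _, hk⟩ := Finset.mem_image.1 h
        exact hcon k hk.symm
      have := count p m hdeg hodd b (e 0) (by
        rw [← h2]
        have := hval 0 (by omega)
        exact mul_ne_zero (mul_pos (hpos 0) hb2).ne' (right_ne_zero_of_mul this.ne')) (insert x (Finset.univ.image r)) (by
          intro y hy
          rw [← h2]
          rcases Finset.mem_insert.1 hy with rfl | hy
          · exact ⟨hx, by rw [h0, mul_zero]⟩
          · obtain ⟨k, _, rfl⟩ := Finset.mem_image.1 hy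
            exact ⟨(hpos _).trans (hr1 k), by rw [hr3, mul_zero]⟩)
      rw [Finset.card_insert_of_notMem hni, Finset.card_image_of_injective _ hrinj] at this
      simp at this
    have hne : ∀ k : Fin m, ∀ z, e k ≤ z → z ≤ e (k + 1) → z ≠ r k → G z ≠ 0 := by
      intro k z hz1 hz2 hz3 h0
      obtain ⟨j, rfl⟩ := hall z (by linarith [hpos k]) h0
      have a1 := hmono.lt_iff_lt.1 (lt_of_le_of_lt hz1 (hr2 j))
      have a2 := hmono.lt_iff_lt.1 (lt_of_lt_of_le (hr1 j) hz2)
      apply hz3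
      congr 1
      apply Fin.ext; omega
    refine ⟨r, fun k => ⟨(hr1 k).le, hr2 k, hr3 k, ?_, ?_⟩, hall⟩
    · intro x hx1 hx2
      have hs := sign_const G hG x (e (k + 1)) (by
        intro w hw
        rw [Set.uIcc_of_le hx2.le] at hw
        exact hne k w (by linarith [hw.1, hr1 k]) hw.2 (by linarith [hw.1] : r k < w).ne')
      have v2 := hval (k + 1) k.2
      have hC : 0 < (G (e (k + 1))) ^ 2 * (p.eval (e (k + 1)) * G x) := by
        have := mul_pos v2 hs
        nlinarith
      exact pos_of_mul_pos_right hC (sq_nonneg _)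
    · intro x hx1 hx2
      have hs := sign_const G hG (e k) x (by
        intro w hw
        rw [Set.uIcc_of_le hx1] at hw
        exact hne k w hw.1 (by linarith [hw.2, hr2 k]) (by linarith [hw.2] : w < r k).ne)
      have v1 := hval k k.2.le
      have ha := halt k k.2
      have hD := mul_pos v1 hs
      have hC : 0 < (G (e k)) ^ 2 * (p.eval (e k)) ^ 2 * -(p.eval (e (k + 1)) * G x) := by
        have := mul_pos hD (neg_pos.2 ha)
        nlinarith
      have := pos_of_mul_pos_right hC (by positivity)
      linarith

theorem core (m : ℕ) (hm : 0 < m) (p : ℝ[X]) (hdeg : p.natDegree ≤ 2 * m + 1) (N : ℝ) (hN : 0 < N)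
    (hodd : ∀ x, p.eval (-x) = - p.eval x)
    (hode : derivative (derivative p) = C 2 * X * derivative p - C N * p)
    (htend : Filter.Tendsto (fun x => p.eval x) Filter.atTop Filter.atTop)
    (c : ℕ → ℝ) (hcpos : ∀ k < m, 0 < c k) (hcm : ∀ k, k + 1 < m → c k < c (k + 1))
    (hz : ∀ x, 0 < x → ((derivative p).eval x = 0 ↔ ∃ k < m, x = c k))
    (hz0 : (derivative p).eval 0 ≠ 0) (heven : ∀ x, (derivative p).eval (-x) = (derivative p).eval x)
    (F : ℝ × ℝ → ℝ) (hF : Continuous F)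
    (hF1 : ∀ x y, (x - y) * F (x, y) = p.eval x - p.eval y)
    (hF2 : ∀ x, F (x, x) = (derivative p).eval x) :
    ∃ S : Fin m → Set (ℝ × ℝ),
      Pairwise (Function.onFun Disjoint S) ∧
      (∀ k, Nonempty (S k ≃ₜ Metric.sphere (0 : EuclideanSpace ℝ (Fin 2)) 1)) ∧
      ∀ q, q ∈ (⋃ k, S k) ↔ F q = 0 := by
  obtain ⟨e, he1, he2, he3, he4, he5⟩ := exists_e m hm p N hN hodd hode htend c hcpos hcm hz
  have hz' : ∀ x, 0 < x → ((derivative p).eval x = 0 ↔ ∃ k < m, x = e k) := by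
    intro x hx
    rw [hz x hx]
    constructor
    · rintro ⟨k, hk, rfl⟩; exact ⟨k, hk, (he2 k hk).symm⟩
    · rintro ⟨k, hk, rfl⟩; exact ⟨k, hk, he2 k hk⟩
  have hsymm : ∀ x y, F (x, y) = F (y, x) := by
    intro x y
    by_cases h : x = y
    · rw [h]
    · apply mul_left_cancel₀ (sub_ne_zero.2 h)
      rw [hF1]
      linear_combination hF1 y x
  have hneg : ∀ x y, F (-x, -y) = F (x, y) := by
    intro x y
    by_cases h : x = y
    · rw [h, hF2, hF2, heven]
    · apply mul_left_cancel₀ (sub_ne_zero.2 h)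
      rw [hF1]
      have := hF1 (-x) (-y)
      rw [hodd, hodd] at this
      linear_combination -this
  have hred : ∀ u : ℝ × ℝ, ‖u‖ = 1 → ∃ b : ℝ, |b| ≤ 1 ∧ ∀ r, F (r • u) = F (r, r * b) := by
    rintro ⟨x, y⟩ hu
    have hx : |x| ≤ 1 := by rw [← hu]; exact norm_fst_le (x, y)
    have hy : |y| ≤ 1 := by rw [← hu]; exact norm_snd_le (x, y)
    rw [Prod.norm_def] at hu
    simp only [Real.norm_eq_abs] at hu
    rcases max_choice |x| |y| with h | h <;> rw [h] at hu
    · rcases (abs_eq zero_le_one).1 hu with rfl | rfl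
      · exact ⟨y, hy, fun r => by simp⟩
      · exact ⟨-y, by simpa using hy, fun r => by rw [← hneg]; simp⟩
    · rcases (abs_eq zero_le_one).1 hu with rfl | rfl
      · exact ⟨x, hx, fun r => by rw [hsymm]; simp⟩
      · exact ⟨-x, by simpa using hx, fun r => by rw [hsymm, ← hneg]; simp⟩
  have hray : ∀ u : ℝ × ℝ, ‖u‖ = 1 → ∃ r : Fin m → ℝ, (∀ k : Fin m, e k ≤ r k ∧ r k < e (k + 1) ∧ F (r k • u) = 0 ∧
      (∀ x, r k < x → x < e (k + 1) → 0 < p.eval (e (k + 1)) * F (x • u)) ∧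
      (∀ x, e k ≤ x → x < r k → p.eval (e (k + 1)) * F (x • u) < 0)) ∧
      ∀ x : ℝ, 0 < x → F (x • u) = 0 → ∃ k, x = r k := by
    intro u hu
    obtain ⟨b, hb, hFb⟩ := hred u hu
    refine ray m hm p hdeg hodd e he1 he3 hz' he4 he5 b hb (fun x => F (x • u)) (by fun_prop) ?_ ?_
    · rintro rfl x
      simp only [hFb, mul_one, hF2]
    · intro x
      simp only [hFb]
      rw [← hF1]; ring
  choose! ρ hρ hρ' using hray
  refine ⟨fun k => {q : ℝ × ℝ | ∃ u : ℝ × ℝ, ‖u‖ = 1 ∧ q = ρ u k • u}, ?_, ?_, ?_⟩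
  · intro j k hjk
    refine Set.disjoint_left.2 ?_
    rintro _ ⟨u, hu, rfl⟩ ⟨v, hv, huv⟩
    obtain ⟨a1, a2, -⟩ := hρ u hu j
    obtain ⟨b1, b2, -⟩ := hρ v hv k
    have hn := congrArg norm huv
    rw [norm_smul, norm_smul, hu, hv, mul_one, mul_one, Real.norm_of_nonneg ((he3 _).le.trans a1),
      Real.norm_of_nonneg ((he3 _).le.trans b1)] at hn
    rw [hn] at a1 a2
    have c1 := he1.lt_iff_lt.1 (lt_of_le_of_lt a1 b2)
    have c2 := he1.lt_iff_lt.1 (lt_of_le_of_lt b1 a2)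
    apply hjk
    apply Fin.ext; omega
  · intro k
    apply circle_homeo (fun u => ρ u k)
    · exact radial_cont F hF _ (e k) (e (k + 1)) (p.eval (e (k + 1)))
        (fun u hu => (hρ u hu k).1) (fun u hu => (hρ u hu k).2.1)
        (fun u hu => (hρ u hu k).2.2.2.1) (fun u hu => (hρ u hu k).2.2.2.2)
    · intro u hu
      exact lt_of_lt_of_le (he3 _) (hρ u hu k).1
  · intro q
    rw [Set.mem_iUnion]
    constructor
    · rintro ⟨k, u, hu, rfl⟩
      exact (hρ u hu k).2.2.1
    · intro hq
      have hq0 : q ≠ 0 := by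
        rintro rfl
        exact hz0 ((hF2 0).symm.trans hq)
      have hn := norm_pos_iff.2 hq0
      have hu : ‖‖q‖⁻¹ • q‖ = 1 := norm_smul_inv_norm (𝕜 := ℝ) hq0
      have hqq : ‖q‖ • ‖q‖⁻¹ • q = q := by rw [smul_smul, mul_inv_cancel₀ hn.ne', one_smul]
      obtain ⟨k, hk⟩ := hρ' _ hu ‖q‖ hn (by rw [hqq]; exact hq)
      exact ⟨k, _, hu, by rw [← hk, hqq]⟩

theorem main' (n M L : ℕ) (hL : L + 1 = n) (hM : 2 * M = L)
    (t : Fin n → ℝ) 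
    (htzero : ∀ x : ℝ, (H n).eval x = 0 ↔ ∃ i, x = t i)
    (t' : Fin L → ℝ) (ht'mono : StrictMono t')
    (ht'zero : ∀ x : ℝ, (H L).eval x = 0 ↔ ∃ i, x = t' i) :
    ∃ C : Fin M → Set (ℝ × ℝ),
      Pairwise (Function.onFun Disjoint C) ∧
      (∀ k, Nonempty (C k ≃ₜ Metric.sphere (0 : EuclideanSpace ℝ (Fin 2)) 1)) ∧
      {p : ℝ × ℝ | Psi n p = 0} = {p : ℝ × ℝ | p.1 = p.2} ∪ (⋃ k, C k) ∧
      (⋃ k, C k) ∩ {p : ℝ × ℝ | p.1 = p.2} = {p : ℝ × ℝ | ∃ i, p = (t' i, t' i)} ∧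
      (⋃ k, C k) ∩ {p : ℝ × ℝ | p.1 + p.2 = 0} =
        {p : ℝ × ℝ | ∃ i, t i ≠ 0 ∧ p = (t i, -(t i))} := by
  subst hL
  obtain ⟨hd, -⟩ := H_derivative L
  have hode := H_ode L
  have hoddp : ∀ x, (H (L + 1)).eval (-x) = - (H (L + 1)).eval x := by
    intro x
    rw [H_parity, Odd.neg_one_pow ⟨M, by omega⟩]; ring
  have hevenp : ∀ x, (H L).eval (-x) = (H L).eval x := by
    intro x
    rw [H_parity, Even.neg_one_pow ⟨M, by omega⟩]; ring
  have hN : (0 : ℝ) < 2 * (L + 1) := by positivity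
  have hde : ∀ x, (derivative (H (L + 1))).eval x = 2 * (L + 1) * (H L).eval x := by
    intro x; rw [hd]; simp
  have hdz : ∀ x, (derivative (H (L + 1))).eval x = 0 ↔ (H L).eval x = 0 := by
    intro x; rw [hde, mul_eq_zero]; simp [hN.ne']
  -- reflection
  have hrefl : (fun i => - t' i.rev) = t' := by
    apply (StrictMono.range_inj (β := Fin L) _ ht'mono).1
    · ext x
      simp only [Set.mem_range]
      constructor
      · rintro ⟨i, rfl⟩
        obtain ⟨j, hj⟩ := (ht'zero (- t' i.rev)).1 (by rw [hevenp]; exact (ht'zero _).2 ⟨_, rfl⟩)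
        exact ⟨j, hj.symm⟩
      · rintro ⟨i, rfl⟩
        obtain ⟨j, hj⟩ := (ht'zero (- t' i)).1 (by rw [hevenp]; exact (ht'zero _).2 ⟨_, rfl⟩)
        exact ⟨j.rev, by rw [Fin.rev_rev, ← hj, neg_neg]⟩
    · intro i j hij
      exact neg_lt_neg (ht'mono (Fin.rev_lt_rev.2 hij))
  have hrefl' : ∀ i, t' i.rev = - t' i := fun i => by
    have := congrFun hrefl i
    linarith
  have hpos : ∀ i : Fin L, M ≤ i.1 → 0 < t' i := by
    intro i hi
    have : i.rev < i := by rw [Fin.lt_def, Fin.val_rev]; omega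
    have := ht'mono this
    rw [hrefl'] at this
    linarith
  have hneg : ∀ i : Fin L, i.1 < M → t' i < 0 := by
    intro i hi
    have : i < i.rev := by rw [Fin.lt_def, Fin.val_rev]; omega
    have := ht'mono this
    rw [hrefl'] at this
    linarith
  have h0 : (H L).eval 0 ≠ 0 := by
    intro h
    obtain ⟨i, hi⟩ := (ht'zero 0).1 h
    rcases Nat.lt_or_ge i.1 M with h | h
    · linarith [hneg i h]
    · linarith [hpos i h]
  obtain ⟨F, hF, hF1, hF2⟩ := exists_divdiff (H (L + 1))
  obtain ⟨S, hS1, hS2, hS3⟩ : ∃ S : Fin M → Set (ℝ × ℝ),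
      Pairwise (Function.onFun Disjoint S) ∧
      (∀ k, Nonempty (S k ≃ₜ Metric.sphere (0 : EuclideanSpace ℝ (Fin 2)) 1)) ∧
      ∀ q, q ∈ (⋃ k, S k) ↔ F q = 0 := by
    rcases Nat.eq_zero_or_pos M with hM0 | hM0
    · have hL0 : L = 0 := by omega
      refine ⟨fun _ => ∅, ?_, ?_, ?_⟩
      · intro i; exact absurd i.2 (by omega)
      · intro i; exact absurd i.2 (by omega)
      · rintro ⟨x, y⟩
        subst hL0
        simp only [Set.iUnion_empty, Set.mem_empty_iff_false, false_iff]
        intro h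
        by_cases hxy : x = y
        · subst hxy
          rw [hF2, hde] at h
          simp [H] at h
        · have := hF1 x y
          rw [h] at this
          simp [H] at this
          apply hxy; linarith
    · apply core M hM0 (H (L + 1)) (by rw [hM]; exact (H_deg _).1) _ hN hoddp hode (H_tendsto _ (by omega))
        (fun k => if h : k < M then t' ⟨M + k, by omega⟩ else 0) _ _ _ _ _ F hF hF1 hF2
      · intro k hk
        simp only [hk, dif_pos]
        exact hpos _ (by simp)
      · intro k hk
        simp only [hk, show k < M by omega, dif_pos]
        exact ht'mono (by rw [Fin.lt_def]; simp)
      · intro x hx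
        rw [hdz, ht'zero]
        constructor
        · rintro ⟨i, rfl⟩
          have hi : M ≤ i.1 := by
            by_contra hcon
            linarith [hneg i (by omega)]
          refine ⟨i.1 - M, by omega, ?_⟩
          rw [dif_pos (by omega)]
          congr 1
          apply Fin.ext
          simp only; omega
        · rintro ⟨k, hk, rfl⟩
          rw [dif_pos hk]
          exact ⟨_, rfl⟩
      · rw [Ne, hdz]; exact h0
      · intro x; rw [hde, hde, hevenp]
  refine ⟨S, hS1, hS2, ?_, ?_, ?_⟩
  · ext ⟨x, y⟩
    rw [Set.mem_union, hS3]
    simp only [Set.mem_ofPred_eq, Psi, mul_eq_zero, Real.exp_ne_zero, or_false]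
    rw [← hF1, mul_eq_zero, sub_eq_zero]
  · ext ⟨x, y⟩
    rw [Set.mem_inter_iff, hS3]
    simp only [Set.mem_ofPred_eq, Prod.mk.injEq]
    constructor
    · rintro ⟨h1, rfl⟩
      rw [hF2, hdz, ht'zero] at h1
      obtain ⟨i, hi⟩ := h1
      exact ⟨i, hi, hi⟩
    · rintro ⟨i, rfl, rfl⟩
      refine ⟨?_, rfl⟩
      rw [hF2, hdz, ht'zero]
      exact ⟨i, rfl⟩
  · have hanti : ∀ x, x ≠ 0 → (F (x, -x) = 0 ↔ (H (L + 1)).eval x = 0) := by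
      intro x hx
      have := hF1 x (-x)
      rw [hoddp] at this
      have h : x * F (x, -x) = (H (L + 1)).eval x := by linarith
      rw [← h, mul_eq_zero]; simp [hx]
    ext ⟨x, y⟩
    rw [Set.mem_inter_iff, hS3]
    simp only [Set.mem_ofPred_eq, Prod.mk.injEq]
    constructor
    · rintro ⟨h1, h2⟩
      obtain rfl : y = -x := by linarith
      have hx : x ≠ 0 := by
        rintro rfl
        rw [neg_zero, hF2, hdz] at h1
        exact h0 h1
      rw [hanti x hx, htzero] at h1
      obtain ⟨i, rfl⟩ := h1
      exact ⟨i, hx, rfl, rfl⟩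
    · rintro ⟨i, hi, rfl, rfl⟩
      refine ⟨?_, by ring⟩
      rw [hanti _ hi, htzero]
      exact ⟨i, rfl⟩

end

open Real Set in
/-- **Proposition 4.1.** Let `n` be odd, with `t 0 < ⋯ < t (n-1)` the zeros of `H_n`
and `t' 0 < ⋯ < t' (n-2)` the zeros of `H_{n-1}`. The nodal set of
`Ψ(x,y) = (H_n(x) - H_n(y))e^{-(x²+y²)/2}` is the union of the diagonal `{x = y}`
and of `(n-1)/2` pairwise disjoint simple closed curves `C k`; the union of the `C k`
meets the diagonal exactly at the `n-1` points `(t'_i, t'_i)` and the antidiagonal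
`{x + y = 0}` exactly at the `n-1` points `(t_i, -t_i)` with `t_i ≠ 0`. -/
theorem nodal_set_of_Psi (n : ℕ) (hodd : Odd n) (hpos : 0 < n)
    (t : Fin n → ℝ) (htmono : StrictMono t)
    (htzero : ∀ x : ℝ, (H n).eval x = 0 ↔ ∃ i, x = t i)
    (t' : Fin (n - 1) → ℝ) (ht'mono : StrictMono t')
    (ht'zero : ∀ x : ℝ, (H (n - 1)).eval x = 0 ↔ ∃ i, x = t' i) :
    ∃ C : Fin ((n - 1) / 2) → Set (ℝ × ℝ),
      Pairwise (Function.onFun Disjoint C) ∧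
      (∀ k, Nonempty (C k ≃ₜ Metric.sphere (0 : EuclideanSpace ℝ (Fin 2)) 1)) ∧
      {p : ℝ × ℝ | Psi n p = 0} = {p : ℝ × ℝ | p.1 = p.2} ∪ (⋃ k, C k) ∧
      (⋃ k, C k) ∩ {p : ℝ × ℝ | p.1 = p.2} = {p : ℝ × ℝ | ∃ i, p = (t' i, t' i)} ∧
      (⋃ k, C k) ∩ {p : ℝ × ℝ | p.1 + p.2 = 0} =
        {p : ℝ × ℝ | ∃ i, t i ≠ 0 ∧ p = (t i, -(t i))} := by
  exact main' n ((n - 1) / 2) (n - 1) (by omega) (by obtain ⟨j, rfl⟩ := hodd; omega) t htzero t'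
    ht'mono ht'zero
end

section
/- Let ℓ ∈ ℕ and let u be a nonzero element of the eigenspace E_ℓ, i.e. a nonzero real linear combination of the functions φ_{ℓ−j,j}, 0 ≤ j ≤ ℓ. Then the number μ(u) of connected components of {(x,y) ∈ ℝ² : u(x,y) ≠ 0} satisfies Courant's bound μ(u) ≤ ℓ(ℓ+1)/2 + 1. -/
/-- The basis eigenfunctions `φ_{m,n}(x,y) = H_m(x) H_n(y) e^{-(x²+y²)/2}` of the 2D
isotropic quantum harmonic oscillator. -/
noncomputable def phi (m n : ℕ) : ℝ × ℝ → ℝ := fun p =>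
  (H m).eval p.1 * (H n).eval p.2 * Real.exp (-(p.1 ^ 2 + p.2 ^ 2) / 2)

/-- The eigenspace `E_ℓ` associated with the eigenvalue `2(ℓ+1)`: the real span of
`φ_{ℓ-j,j}`, `0 ≤ j ≤ ℓ`. -/
noncomputable def eigenspace (ℓ : ℕ) : Submodule ℝ (ℝ × ℝ → ℝ) :=
  Submodule.span ℝ {f : ℝ × ℝ → ℝ | ∃ j : ℕ, j ≤ ℓ ∧ f = phi (ℓ - j) j}

/-- The number `μ(u)` of nodal domains of `u`: the number of connected components of
`{p : u p ≠ 0}`. -/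
noncomputable def mu (u : ℝ × ℝ → ℝ) : ℕ :=
  {C : Set (ℝ × ℝ) | ∃ p : ℝ × ℝ, u p ≠ 0 ∧
    C = connectedComponentIn {q : ℝ × ℝ | u q ≠ 0} p}.ncard


open MeasureTheory Filter Topology

lemma H_succ (n : ℕ) : H (n + 1) =
    Polynomial.C 2 * Polynomial.X * H n - Polynomial.C (2 * (n : ℝ)) * H (n - 1) := by
  cases n with
  | zero => simp [H]
  | succ n => simp [H]

lemma H_deriv (n : ℕ) : Polynomial.derivative (H n) = Polynomial.C (2 * (n : ℝ)) * H (n - 1) := by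
  induction n using Nat.strong_induction_on with
  | _ n ih =>
    match n with
    | 0 => simp [H]
    | 1 => simp [H]
    | n + 2 =>
      have h1 := ih (n + 1) (by omega)
      have h0 := ih n (by omega)
      have hs := H_succ n
      simp only [Nat.add_sub_cancel, Nat.cast_add, Nat.cast_one] at h1
      rw [H]
      simp only [Polynomial.derivative_sub, Polynomial.derivative_mul, Polynomial.derivative_C,
        Polynomial.derivative_X, h1, h0]
      simp only [show n + 2 - 1 = n + 1 from rfl, hs, Nat.cast_add,
        Polynomial.C_mul, Polynomial.C_add, Nat.cast_ofNat, Polynomial.C_1]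
      simp only [map_ofNat, map_natCast]
      ring

lemma H_deriv_rel (n : ℕ) :
    Polynomial.derivative (H n) = Polynomial.C 2 * Polynomial.X * H n - H (n + 1) := by
  rw [H_deriv, H_succ]; ring

lemma poly_integrable (p : Polynomial ℝ) {b : ℝ} (hb : 0 < b) :
    Integrable (fun x : ℝ => p.eval x * Real.exp (-b * x ^ 2)) := by
  induction p using Polynomial.induction_on' with
  | add p q hp hq =>
    simp only [Polynomial.eval_add, add_mul]
    exact hp.add hq
  | monomial n a =>
    have h := integrable_rpow_mul_exp_neg_mul_sq hb (s := (n : ℝ))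
      (by have : (0:ℝ) ≤ n := Nat.cast_nonneg n
          linarith)
    simp only [Real.rpow_natCast] at h
    simp only [Polynomial.eval_monomial, mul_assoc]
    exact h.const_mul a

lemma poly_tendsto (p : Polynomial ℝ) :
    Tendsto (fun x : ℝ => p.eval x * Real.exp (-1 * x ^ 2)) (cocompact ℝ) (𝓝 0) := by
  induction p using Polynomial.induction_on' with
  | add p q hp hq =>
    simp only [Polynomial.eval_add, add_mul]
    simpa using hp.add hq
  | monomial n a =>
    have h := tendsto_rpow_abs_mul_exp_neg_mul_sq_cocompact (a := 1) one_pos (n : ℝ)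
    simp only [Real.rpow_natCast] at h
    have h2 : Tendsto (fun x : ℝ => x ^ n * Real.exp (-1 * x ^ 2)) (cocompact ℝ) (𝓝 0) := by
      apply squeeze_zero_norm _ h
      intro x
      simp [Real.norm_eq_abs]
    simp only [Polynomial.eval_monomial, mul_assoc]
    simpa using h2.const_mul a

/-- integration by parts on a line -/
lemma ibp_line (p q : Polynomial ℝ) (g : ℝ → ℝ) (C : ℝ) (hgm : Measurable g)
    (hgC : ∀ x, |g x| ≤ C) (hloc : ∀ x, p.eval x ≠ 0 → ∀ᶠ z in 𝓝 x, g z = g x) :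
    ∫ x, g x * ((Polynomial.derivative p * q
      + p * (Polynomial.derivative q - Polynomial.C 2 * Polynomial.X * q)).eval x
        * Real.exp (-1 * x ^ 2)) = 0 := by
  by_cases hp : p = 0
  · simp [hp]
  set r := (Polynomial.derivative p * q
      + p * (Polynomial.derivative q - Polynomial.C 2 * Polynomial.X * q)) with hr
  set f : ℝ → ℝ := fun x => g x * ((p * q).eval x * Real.exp (-1 * x ^ 2)) with hf
  set f' : ℝ → ℝ := fun x => g x * (r.eval x * Real.exp (-1 * x ^ 2)) with hf'
  have hder0 : ∀ x, HasDerivAt (fun x => (p * q).eval x * Real.exp (-1 * x ^ 2))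
      (r.eval x * Real.exp (-1 * x ^ 2)) x := by
    intro x
    have h1 := (p * q).hasDerivAt x
    have h2 : HasDerivAt (fun x : ℝ => Real.exp (-1 * x ^ 2))
        (Real.exp (-1 * x ^ 2) * (-1 * (2 * x))) x := by
      have := ((hasDerivAt_pow 2 x).const_mul (-1)).exp
      simpa using this
    refine HasDerivAt.congr_deriv (h1.mul h2) ?_
    simp [hr]; ring
  have hC : 0 ≤ C := (abs_nonneg _).trans (hgC 0)
  have hint : Integrable f' := by
    apply (poly_integrable r one_pos).bdd_mul (c := C) hgm.aestronglyMeasurable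
    exact Eventually.of_forall hgC
  have hlimf : Tendsto f (cocompact ℝ) (𝓝 0) := by
    have := ((poly_tendsto (p * q)).norm).const_mul C
    simp only [norm_zero, mul_zero] at this
    apply squeeze_zero_norm _ this
    intro x
    change ‖g x * _‖ ≤ _
    rw [norm_mul]
    exact mul_le_mul_of_nonneg_right (hgC x) (norm_nonneg _)
  have hcont : Continuous f := by
    rw [continuous_iff_continuousAt]
    intro x
    by_cases hx : p.eval x = 0
    · have h0 : f x = 0 := by simp [hf, hx]
      rw [ContinuousAt, h0]
      have hc : Tendsto (fun z => C * ‖(p * q).eval z * Real.exp (-1 * z ^ 2)‖) (𝓝 x) (𝓝 0) := by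
        have : Continuous (fun z => C * ‖(p * q).eval z * Real.exp (-1 * z ^ 2)‖) := by fun_prop
        have := this.tendsto x
        simpa [hx] using this
      apply squeeze_zero_norm _ hc
      intro z
      change ‖g z * _‖ ≤ _
      rw [norm_mul]
      exact mul_le_mul_of_nonneg_right (hgC z) (norm_nonneg _)
    · have : f =ᶠ[𝓝 x] fun z => g x * ((p * q).eval z * Real.exp (-1 * z ^ 2)) := by
        filter_upwards [hloc x hx] with z hz
        simp only [hf, hz]
      exact (ContinuousAt.congr (by fun_prop) this.symm)
  have hd : ∀ x, p.eval x ≠ 0 → HasDerivAt f (f' x) x := by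
    intro x hx
    have : f =ᶠ[𝓝 x] fun z => g x * ((p * q).eval z * Real.exp (-1 * z ^ 2)) := by
      filter_upwards [hloc x hx] with z hz
      simp only [hf, hz]
    exact ((hder0 x).const_mul (g x)).congr_of_eventuallyEq this
  have hfin : ({x | p.eval x = 0} : Set ℝ).Finite := by
    have := Polynomial.finite_setOfPred_isRoot hp
    simpa [Polynomial.IsRoot] using this
  have h1 := intervalIntegral_tendsto_integral hint tendsto_neg_atTop_atBot tendsto_id
  have h2 : ∀ R : ℝ, ∫ x in (-R)..(id R), f' x = f R - f (-R) := by
    intro R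
    apply integral_eq_of_hasDerivAt_off_countable f f' hfin.countable hcont.continuousOn
    · intro x hx; exact hd x hx.2
    · exact hint.intervalIntegrable
  simp only [h2] at h1
  have h3 : Tendsto (fun R => f R - f (-R)) atTop (𝓝 (0 - 0)) :=
    (hlimf.mono_left atTop_le_cocompact).sub
      ((hlimf.mono_left atBot_le_cocompact).comp tendsto_neg_atTop_atBot)
  simpa using tendsto_nhds_unique h1 h3

/-- one dimensional orthogonality integrals -/
noncomputable def kap (n : ℕ) : ℝ := ∫ x : ℝ, ((H n * H n).eval x * Real.exp (-1 * x ^ 2))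

lemma H_ibp (n : ℕ) (q : Polynomial ℝ) :
    ∫ x : ℝ, ((H (n + 1) * q).eval x * Real.exp (-1 * x ^ 2))
      = ∫ x : ℝ, ((H n * Polynomial.derivative q).eval x * Real.exp (-1 * x ^ 2)) := by
  have h := ibp_line (H n) q (fun _ => 1) 1 measurable_const (by simp) (by simp)
  rw [H_deriv_rel] at h
  have h2 : (Polynomial.C 2 * Polynomial.X * H n - H (n + 1)) * q +
      H n * (Polynomial.derivative q - Polynomial.C 2 * Polynomial.X * q)
      = H n * Polynomial.derivative q - H (n + 1) * q := by ring
  rw [h2] at h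
  simp only [one_mul, Polynomial.eval_sub, sub_mul] at h
  rw [integral_sub (poly_integrable _ one_pos) (poly_integrable _ one_pos)] at h
  linarith

lemma H_orth_aux (n : ℕ) : ∀ m, m < n →
    ∫ x : ℝ, ((H n * H m).eval x * Real.exp (-1 * x ^ 2)) = 0 := by
  induction n with
  | zero => intro m hm; omega
  | succ n ih =>
    intro m hm
    rw [H_ibp, H_deriv]
    cases m with
    | zero => simp
    | succ m =>
      have := ih m (by omega)
      simp only [Nat.add_sub_cancel]
      rw [show H n * (Polynomial.C (2 * ((m + 1 : ℕ) : ℝ)) * H m)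
        = Polynomial.C (2 * ((m + 1 : ℕ) : ℝ)) * (H n * H m) by ring]
      simp only [Polynomial.eval_C_mul, mul_assoc] at this ⊢
      simp only [integral_const_mul, this]; simp

lemma H_orth {m n : ℕ} (h : m ≠ n) :
    ∫ x : ℝ, ((H n * H m).eval x * Real.exp (-1 * x ^ 2)) = 0 := by
  rcases lt_or_gt_of_ne h with h | h
  · exact H_orth_aux n m h
  · rw [mul_comm]; exact H_orth_aux m n h

lemma kap_succ (n : ℕ) : kap (n + 1) = 2 * (n + 1) * kap n := by
  rw [kap, H_ibp, H_deriv, kap]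
  simp only [Nat.add_sub_cancel]
  rw [show H n * (Polynomial.C (2 * ((n + 1 : ℕ) : ℝ)) * H n)
        = Polynomial.C (2 * ((n + 1 : ℕ) : ℝ)) * (H n * H n) by ring]
  simp only [Polynomial.eval_C_mul, mul_assoc]
  simp only [integral_const_mul]; push_cast; ring

lemma kap_pos (n : ℕ) : 0 < kap n := by
  induction n with
  | zero =>
    have := integral_gaussian 1
    simp only [kap, H, mul_one, Polynomial.eval_one, one_mul]
    rw [this]; positivity
  | succ n ih => rw [kap_succ]; positivity

lemma phi_cont (m n : ℕ) : Continuous (phi m n) := by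
  unfold phi; fun_prop

lemma phi_mul (m n m' n' : ℕ) (p : ℝ × ℝ) : phi m n p * phi m' n' p =
    ((H m * H m').eval p.1 * Real.exp (-1 * p.1 ^ 2)) *
      ((H n * H n').eval p.2 * Real.exp (-1 * p.2 ^ 2)) := by
  have : Real.exp (-1 * p.1 ^ 2) * Real.exp (-1 * p.2 ^ 2) =
      Real.exp (-(p.1 ^ 2 + p.2 ^ 2) / 2) * Real.exp (-(p.1 ^ 2 + p.2 ^ 2) / 2) := by
    rw [← Real.exp_add, ← Real.exp_add]; congr 1; ring
  simp only [phi, Polynomial.eval_mul]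
  linear_combination (-(H m).eval p.1 * (H n).eval p.2 * (H m').eval p.1 * (H n').eval p.2) * this

lemma phi_mul_integrable (m n m' n' : ℕ) : Integrable (fun p => phi m n p * phi m' n' p) := by
  simp only [phi_mul]
  exact (poly_integrable _ one_pos).mul_prod (poly_integrable _ one_pos)

lemma phi_integral (m n m' n' : ℕ) : ∫ p, phi m n p * phi m' n' p =
    (∫ x : ℝ, ((H m * H m').eval x * Real.exp (-1 * x ^ 2))) *
      ∫ x : ℝ, ((H n * H n').eval x * Real.exp (-1 * x ^ 2)) := by
  simp only [phi_mul]
  rw [Measure.volume_eq_prod]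
  exact integral_prod_mul (f := fun x : ℝ => ((H m * H m').eval x * Real.exp (-1 * x ^ 2)))
    (g := fun x : ℝ => ((H n * H n').eval x * Real.exp (-1 * x ^ 2)))

lemma phi_memLp (m n : ℕ) : MemLp (phi m n) 2 := by
  rw [memLp_two_iff_integrable_sq (phi_cont m n).aestronglyMeasurable]
  simp only [pow_two]
  exact phi_mul_integrable m n m n

lemma exp_lin_memLp (s t : ℝ) : MemLp (fun p : ℝ × ℝ =>
    Real.exp (-(p.1 ^ 2 + p.2 ^ 2) / 2) * Real.exp |s * p.1 + t * p.2|) 2 := by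
  rw [memLp_two_iff_integrable_sq (by fun_prop)]
  have h1 : Integrable (fun p : ℝ × ℝ => Real.exp (-(1/2) * p.1 ^ 2) * Real.exp (-(1/2) * p.2 ^ 2)) :=
    (integrable_exp_neg_mul_sq (b := 1/2) (by norm_num)).mul_prod
      (integrable_exp_neg_mul_sq (b := 1/2) (by norm_num))
  refine (h1.const_mul (Real.exp (2 * s ^ 2 + 2 * t ^ 2))).mono'
    (by fun_prop) (Eventually.of_forall fun p => ?_)
  rw [Real.norm_of_nonneg (by positivity), ← Real.exp_add, ← Real.exp_add, ← Real.exp_add, pow_two, ← Real.exp_add,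
    Real.exp_le_exp]
  have := abs_add_le (s * p.1) (t * p.2)
  rw [abs_mul, abs_mul] at this
  have e1 := sq_abs p.1
  have e2 := sq_abs p.2
  have e3 := sq_abs s
  have e4 := sq_abs t
  nlinarith [sq_nonneg (2 * |s| - |p.1|), sq_nonneg (2 * |t| - |p.2|)]

lemma phi_lin (s t : ℝ) (m n : ℕ) (p : ℝ × ℝ) : (s * p.1 + t * p.2) * phi m n p =
    s / 2 * phi (m + 1) n p + s * m * phi (m - 1) n p
      + (t / 2 * phi m (n + 1) p + t * n * phi m (n - 1) p) := by
  have h1 := congrArg (Polynomial.eval p.1) (H_succ m)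
  have h2 := congrArg (Polynomial.eval p.2) (H_succ n)
  simp only [Polynomial.eval_sub, Polynomial.eval_mul, Polynomial.eval_C, Polynomial.eval_X] at h1 h2
  simp only [phi, h1, h2]
  ring

lemma orth_lin (f : ℝ × ℝ → ℝ) (hf : MemLp f 2) (h : ∀ m n, ∫ p, f p * phi m n p = 0)
    (s t : ℝ) (k : ℕ) : ∀ m n, Integrable (fun p => f p * ((s * p.1 + t * p.2) ^ k * phi m n p)) ∧
      ∫ p, f p * ((s * p.1 + t * p.2) ^ k * phi m n p) = 0 := by
  induction k with
  | zero =>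
    intro m n
    simp only [pow_zero, one_mul]
    exact ⟨hf.integrable_mul (phi_memLp m n), h m n⟩
  | succ k ih =>
    intro m n
    have e : (fun p : ℝ × ℝ => f p * ((s * p.1 + t * p.2) ^ (k + 1) * phi m n p)) = fun p =>
        (s / 2 * (f p * ((s * p.1 + t * p.2) ^ k * phi (m + 1) n p))
        + s * m * (f p * ((s * p.1 + t * p.2) ^ k * phi (m - 1) n p)))
        + (t / 2 * (f p * ((s * p.1 + t * p.2) ^ k * phi m (n + 1) p))
        + t * n * (f p * ((s * p.1 + t * p.2) ^ k * phi m (n - 1) p))) := by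
      funext p
      linear_combination f p * (s * p.1 + t * p.2) ^ k * phi_lin s t m n p
    have i1 := (ih (m + 1) n).1.const_mul (s / 2)
    have i2 := (ih (m - 1) n).1.const_mul (s * m)
    have i3 := (ih m (n + 1)).1.const_mul (t / 2)
    have i4 := (ih m (n - 1)).1.const_mul (t * n)
    rw [e]
    refine ⟨(i1.add i2).add (i3.add i4), ?_⟩
    refine (integral_add (i1.add i2) (i3.add i4)).trans ?_
    refine (congrArg₂ (· + ·) (integral_add i1 i2) (integral_add i3 i4)).trans ?_
    simp only [integral_const_mul, (ih _ _).2]; simp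

lemma phi_zero (p : ℝ × ℝ) : phi 0 0 p = Real.exp (-(p.1 ^ 2 + p.2 ^ 2) / 2) := by
  simp [phi, H]

lemma orth_char (f : ℝ × ℝ → ℝ) (hf : MemLp f 2) (h : ∀ m n, ∫ p, f p * phi m n p = 0)
    (s t : ℝ) : ∫ p : ℝ × ℝ, ((f p * phi 0 0 p : ℝ) : ℂ)
      * Complex.exp (((s * p.1 + t * p.2 : ℝ) : ℂ) * Complex.I) = 0 := by
  have hint : Integrable (fun p : ℝ × ℝ => f p * (Real.exp (-(p.1 ^ 2 + p.2 ^ 2) / 2)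
      * Real.exp |s * p.1 + t * p.2|)) := hf.integrable_mul (exp_lin_memLp s t)
  have hexp : ∀ x : ℝ, HasSum (fun k : ℕ => x ^ k / (k.factorial : ℝ)) (Real.exp x) := by
    intro x
    rw [Real.exp_eq_exp_ℝ]
    exact NormedSpace.expSeries_div_hasSum_exp x
  have hcexp : ∀ x : ℂ, HasSum (fun k : ℕ => x ^ k / (k.factorial : ℂ)) (Complex.exp x) := by
    intro x
    rw [Complex.exp_eq_exp_ℂ]
    exact NormedSpace.expSeries_div_hasSum_exp x
  have key := hasSum_integral_of_dominated_convergence (μ := (volume : Measure (ℝ × ℝ)))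
    (F := fun (k : ℕ) p => ((f p * phi 0 0 p : ℝ) : ℂ) *
      ((((s * p.1 + t * p.2 : ℝ) : ℂ) * Complex.I) ^ k / (k.factorial : ℂ)))
    (f := fun p => ((f p * phi 0 0 p : ℝ) : ℂ)
      * Complex.exp (((s * p.1 + t * p.2 : ℝ) : ℂ) * Complex.I))
    (fun k p => |f p * phi 0 0 p| * (|s * p.1 + t * p.2| ^ k / (k.factorial : ℝ)))
    ?_ ?_ ?_ ?_ ?_
  · have hz : ∀ k : ℕ, ∫ p : ℝ × ℝ, ((f p * phi 0 0 p : ℝ) : ℂ) *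
      ((((s * p.1 + t * p.2 : ℝ) : ℂ) * Complex.I) ^ k / (k.factorial : ℂ)) = 0 := by
      intro k
      have e : (fun p : ℝ × ℝ => ((f p * phi 0 0 p : ℝ) : ℂ) *
        ((((s * p.1 + t * p.2 : ℝ) : ℂ) * Complex.I) ^ k / (k.factorial : ℂ))) = fun p =>
        (Complex.I ^ k / (k.factorial : ℂ)) *
          ((f p * ((s * p.1 + t * p.2) ^ k * phi 0 0 p) : ℝ) : ℂ) := by
        funext p
        rw [mul_pow]
        push_cast
        ring
      rw [e, integral_const_mul, integral_complex_ofReal, (orth_lin f hf h s t k 0 0).2]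
      simp
    simp only [hz] at key
    exact (hasSum_zero.unique key).symm
  · intro k
    have := (phi_cont 0 0).aestronglyMeasurable (μ := (volume : Measure (ℝ × ℝ)))
    have h2 := hf.1.mul this
    refine AEStronglyMeasurable.mul (Complex.continuous_ofReal.comp_aestronglyMeasurable h2) ?_
    exact Continuous.aestronglyMeasurable (by fun_prop)
  · intro k
    refine Eventually.of_forall fun p => le_of_eq ?_
    rw [norm_mul, norm_div, norm_pow, norm_mul, Complex.norm_I, mul_one, Complex.norm_real,
      Complex.norm_real, Complex.norm_natCast]
    rfl
  · refine Eventually.of_forall fun p => ?_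
    exact ((hexp _).mul_left _).summable
  · have e : (fun p : ℝ × ℝ => ∑' k : ℕ, |f p * phi 0 0 p| *
        (|s * p.1 + t * p.2| ^ k / (k.factorial : ℝ))) = fun p => ‖f p *
        (Real.exp (-(p.1 ^ 2 + p.2 ^ 2) / 2) * Real.exp |s * p.1 + t * p.2|)‖ := by
      funext p
      rw [((hexp _).mul_left _).tsum_eq, phi_zero, Real.norm_eq_abs, abs_mul, abs_mul, abs_mul,
        abs_of_pos (Real.exp_pos _), abs_of_pos (Real.exp_pos _), mul_assoc]
    rw [e]
    exact hint.norm
  · exact Eventually.of_forall fun p => (hcexp _).mul_left _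

lemma ae_zero_of_char (h : ℝ × ℝ → ℝ) (hi : Integrable h)
    (hc : ∀ s t : ℝ, ∫ p : ℝ × ℝ, ((h p : ℝ) : ℂ)
      * Complex.exp (((s * p.1 + t * p.2 : ℝ) : ℂ) * Complex.I) = 0) : h =ᵐ[volume] 0 := by
  have hm := hi.1.aemeasurable
  have hmn : AEMeasurable (fun p => - h p) volume := hm.neg
  have fin : ∀ k : ℝ × ℝ → ℝ, Integrable k →
      IsFiniteMeasure (volume.withDensity (fun p => ENNReal.ofReal (k p))) := by
    intro k hk
    exact isFiniteMeasure_withDensity_ofReal hk.2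
  have := fin h hi
  have := fin (fun p => - h p) hi.neg
  have hint : ∀ L : StrongDual ℝ (ℝ × ℝ), ∀ k : ℝ × ℝ → ℝ, Integrable k →
      Integrable (fun p => ((k p : ℝ) : ℂ) * Complex.exp (((L p : ℝ) : ℂ) * Complex.I)) := by
    intro L k hk
    refine hk.ofReal.mul_bdd (c := 1) (Continuous.aestronglyMeasurable (by fun_prop)) ?_
    refine Eventually.of_forall fun p => ?_
    rw [Complex.norm_exp_ofReal_mul_I]
  have eq : volume.withDensity (fun p => ENNReal.ofReal (h p))
      = volume.withDensity (fun p => ENNReal.ofReal (- h p)) := by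
    apply Measure.ext_of_charFunDual
    funext L
    rw [charFunDual_apply, charFunDual_apply,
      integral_withDensity_eq_integral_toReal_smul₀ hm.ennreal_ofReal (by simp),
      integral_withDensity_eq_integral_toReal_smul₀ hmn.ennreal_ofReal (by simp), ← sub_eq_zero]
    simp only [ENNReal.toReal_ofReal', Complex.real_smul]
    rw [← integral_sub (hint L _ hi.pos_part) (hint L _ hi.neg_part)]
    rw [← hc (L (1, 0)) (L (0, 1))]
    congr 1
    funext p
    have hL : L p = L (1, 0) * p.1 + L (0, 1) * p.2 := by
      have : p = p.1 • ((1 : ℝ), (0 : ℝ)) + p.2 • ((0 : ℝ), (1 : ℝ)) := by ext <;> simp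
      conv_lhs => rw [this]
      rw [map_add, map_smul, map_smul]; simp; ring
    rw [← sub_mul, hL, ← Complex.ofReal_sub]
    congr 2
    rcases le_total (h p) 0 with h0 | h0
    · rw [max_eq_right h0, max_eq_left (by linarith)]; ring
    · rw [max_eq_left h0, max_eq_right (by linarith)]; ring
  rw [withDensity_eq_iff_of_sigmaFinite hm.ennreal_ofReal hmn.ennreal_ofReal] at eq
  filter_upwards [eq] with p hp
  simp only [Pi.zero_apply]
  rcases le_total (h p) 0 with h0 | h0
  · rw [ENNReal.ofReal_of_nonpos h0] at hp
    have := ENNReal.ofReal_eq_zero.1 hp.symm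
    linarith
  · rw [ENNReal.ofReal_of_nonpos (p := - h p) (by linarith)] at hp
    have := ENNReal.ofReal_eq_zero.1 hp
    linarith

lemma complete (f : ℝ × ℝ → ℝ) (hf : MemLp f 2) (h : ∀ m n, ∫ p, f p * phi m n p = 0) :
    f =ᵐ[volume] 0 := by
  have := ae_zero_of_char (fun p => f p * phi 0 0 p) (hf.integrable_mul (phi_memLp 0 0))
    (orth_char f hf h)
  filter_upwards [this] with p hp
  simp only [Pi.zero_apply, mul_eq_zero] at hp
  rcases hp with hp | hp
  · exact hp
  · rw [phi_zero] at hp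
    exact absurd hp (Real.exp_pos _).ne'

lemma inner_toLp' {f g : ℝ × ℝ → ℝ} (hf : MemLp f 2) (hg : MemLp g 2) :
    inner ℝ (hf.toLp f) (hg.toLp g) = ∫ p, f p * g p := by
  rw [L2.inner_def]
  apply integral_congr_ae
  filter_upwards [hf.coeFn_toLp, hg.coeFn_toLp] with p h1 h2
  rw [h1, h2]; simp [mul_comm]

noncomputable def nrm (i : ℕ × ℕ) : ℝ := Real.sqrt (kap i.1 * kap i.2)

lemma nrm_pos (i : ℕ × ℕ) : 0 < nrm i := Real.sqrt_pos.2 (mul_pos (kap_pos _) (kap_pos _))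

lemma nrm_sq (i : ℕ × ℕ) : nrm i ^ 2 = kap i.1 * kap i.2 :=
  Real.sq_sqrt (mul_pos (kap_pos _) (kap_pos _)).le

noncomputable def ebas (i : ℕ × ℕ) : Lp ℝ 2 (volume : Measure (ℝ × ℝ)) :=
  (nrm i)⁻¹ • (phi_memLp i.1 i.2).toLp (phi i.1 i.2)

lemma ebas_orthonormal : Orthonormal ℝ ebas := by
  rw [orthonormal_iff_ite]
  intro i j
  simp only [ebas, inner_smul_left, inner_smul_right, inner_toLp', phi_integral]
  split_ifs with hij
  · subst hij
    have h := nrm_sq i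
    have hp := nrm_pos i
    simp only [kap] at h
    rw [← h]
    simp; field_simp
  · have : i.1 ≠ j.1 ∨ i.2 ≠ j.2 := by
      by_contra hc
      push Not at hc
      exact hij (Prod.ext hc.1 hc.2)
    rcases this with h | h
    · rw [H_orth h.symm]; simp
    · rw [H_orth h.symm]; simp

lemma ebas_inner (i : ℕ × ℕ) {f : ℝ × ℝ → ℝ} (hf : MemLp f 2) :
    inner ℝ (ebas i) (hf.toLp f) = (nrm i)⁻¹ * ∫ p, f p * phi i.1 i.2 p := by
  simp only [ebas, inner_smul_left, inner_toLp']
  simp [mul_comm]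

lemma ebas_total : (Submodule.span ℝ (Set.range ebas))ᗮ = ⊥ := by
  rw [Submodule.eq_bot_iff]
  intro f hf
  have hm : MemLp f 2 volume := Lp.memLp f
  have e : hm.toLp f = f := Lp.toLp_coeFn f hm
  have h : ∀ m n, ∫ p, f p * phi m n p = 0 := by
    intro m n
    have h1 := (Submodule.mem_orthogonal _ _).1 hf (ebas (m, n))
      (Submodule.subset_span ⟨_, rfl⟩)
    rw [← e, ebas_inner] at h1
    rcases mul_eq_zero.1 h1 with h2 | h2
    · exact absurd h2 (inv_ne_zero (nrm_pos _).ne')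
    · exact h2
  exact (Lp.eq_zero_iff_ae_eq_zero).2 (complete f hm h)

noncomputable def hbas : HilbertBasis (ℕ × ℕ) ℝ (Lp ℝ 2 (volume : Measure (ℝ × ℝ))) :=
  HilbertBasis.mkOfOrthogonalEqBot ebas_orthonormal ebas_total

lemma hbas_apply (i : ℕ × ℕ) : hbas i = ebas i := by
  rw [hbas, HilbertBasis.coe_mkOfOrthogonalEqBot]

noncomputable def cf (f : ℝ × ℝ → ℝ) (i : ℕ × ℕ) : ℝ := (nrm i)⁻¹ * ∫ p, f p * phi i.1 i.2 p

lemma parseval {f : ℝ × ℝ → ℝ} (hf : MemLp f 2) :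
    HasSum (fun i => cf f i ^ 2) (∫ p, f p * f p) := by
  have h := hbas.hasSum_inner_mul_inner (hf.toLp f) (hf.toLp f)
  rw [inner_toLp'] at h
  have e : (fun i => cf f i ^ 2) = fun i =>
      inner ℝ (hf.toLp f) (hbas i) * inner ℝ (hbas i) (hf.toLp f) := by
    funext i
    rw [real_inner_comm, hbas_apply, ebas_inner i hf, cf]; ring
  rw [e]; exact h

lemma nrm_shift1 (m n : ℕ) : nrm (m + 1, n) ^ 2 = 2 * (m + 1) * nrm (m, n) ^ 2 := by
  simp only [nrm_sq, kap_succ]; ring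

lemma nrm_shift2 (m n : ℕ) : nrm (m, n + 1) ^ 2 = 2 * (n + 1) * nrm (m, n) ^ 2 := by
  simp only [nrm_sq, kap_succ]; ring

lemma spectral (ℓ : ℕ) (v A B : ℝ × ℝ → ℝ) (hv : MemLp v 2) (hA : MemLp A 2) (hB : MemLp B 2)
    (hvc : Continuous v)
    (hAi : ∀ m n, ∫ p, A p * phi m n p = ∫ p, v p * phi (m + 1) n p)
    (hBi : ∀ m n, ∫ p, B p * phi m n p = ∫ p, v p * phi m (n + 1) p)
    (hE : (∫ p, A p * A p) + ∫ p, B p * B p = 2 * ℓ * ∫ p, v p * v p)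
    (h0 : ∀ m n, m + n < ℓ → ∫ p, v p * phi m n p = 0) :
    ∃ d : ℕ × ℕ → ℝ, ∀ p, v p = ∑ i ∈ Finset.HasAntidiagonal.antidiagonal ℓ, d i * phi i.1 i.2 p := by
  have sA : HasSum (fun i : ℕ × ℕ => 2 * (i.1 : ℝ) * cf v i ^ 2) (∫ p, A p * A p) := by
    have inj : Function.Injective (fun i : ℕ × ℕ => (i.1 + 1, i.2)) := by
      rintro ⟨a, b⟩ ⟨c, d⟩ h
      simpa using h
    rw [← inj.hasSum_iff]
    · convert parseval hA using 1
      funext i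
      have := nrm_shift1 i.1 i.2
      have p1 := nrm_pos (i.1 + 1, i.2)
      have p2 := nrm_pos (i.1, i.2)
      simp only [Function.comp, cf, hAi, mul_pow, inv_pow, this]
      push_cast
      field_simp
    · rintro ⟨a, b⟩ hab
      cases a with
      | zero => simp
      | succ a => exact absurd ⟨(a, b), rfl⟩ hab
  have sB : HasSum (fun i : ℕ × ℕ => 2 * (i.2 : ℝ) * cf v i ^ 2) (∫ p, B p * B p) := by
    have inj : Function.Injective (fun i : ℕ × ℕ => (i.1, i.2 + 1)) := by
      rintro ⟨a, b⟩ ⟨c, d⟩ h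
      simpa using h
    rw [← inj.hasSum_iff]
    · convert parseval hB using 1
      funext i
      have := nrm_shift2 i.1 i.2
      have p1 := nrm_pos (i.1, i.2 + 1)
      have p2 := nrm_pos (i.1, i.2)
      simp only [Function.comp, cf, hBi, mul_pow, inv_pow, this]
      push_cast
      field_simp
    · rintro ⟨a, b⟩ hab
      cases b with
      | zero => simp
      | succ b => exact absurd ⟨(a, b), rfl⟩ hab
  have sV := (parseval hv).mul_left (2 * (ℓ : ℝ))
  have sD := (sA.add sB).sub sV
  rw [hE, sub_self] at sD
  have hlow : ∀ i : ℕ × ℕ, i.1 + i.2 < ℓ → cf v i = 0 := by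
    intro i hi
    rw [cf, h0 _ _ hi, mul_zero]
  have nonneg : ∀ i : ℕ × ℕ, 0 ≤ 2 * (i.1 : ℝ) * cf v i ^ 2 + 2 * (i.2 : ℝ) * cf v i ^ 2
      - 2 * (ℓ : ℝ) * cf v i ^ 2 := by
    intro i
    rcases lt_or_ge (i.1 + i.2) ℓ with h | h
    · rw [hlow i h]; simp
    · have : (ℓ : ℝ) ≤ i.1 + i.2 := by exact_mod_cast h
      nlinarith [sq_nonneg (cf v i)]
  have hz := (hasSum_zero_iff_of_nonneg nonneg).1 sD
  have hc : ∀ i : ℕ × ℕ, i ∉ Finset.HasAntidiagonal.antidiagonal ℓ → cf v i = 0 := by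
    intro i hi
    rw [Finset.HasAntidiagonal.mem_antidiagonal] at hi
    rcases lt_or_ge (i.1 + i.2) ℓ with h | h
    · exact hlow i h
    · have h2 := congrFun hz i
      simp only [Pi.zero_apply] at h2
      have h3 : (ℓ : ℝ) < i.1 + i.2 := by exact_mod_cast lt_of_le_of_ne h (Ne.symm hi)
      have h4 : (2 * ((i.1 : ℝ) + i.2 - ℓ)) * cf v i ^ 2 = 0 := by linarith
      rcases mul_eq_zero.1 h4 with h5 | h5
      · linarith
      · exact pow_eq_zero_iff (two_ne_zero) |>.1 h5
  have hrep := hbas.hasSum_repr (hv.toLp v)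
  have hrc : ∀ i, hbas.repr (hv.toLp v) i = cf v i := by
    intro i
    rw [HilbertBasis.repr_apply_apply, hbas_apply, ebas_inner i hv, cf]
  simp only [hrc, hbas_apply] at hrep
  have hfin : HasSum (fun i => cf v i • ebas i) (∑ i ∈ Finset.HasAntidiagonal.antidiagonal ℓ, cf v i • ebas i) := by
    apply hasSum_sum_of_ne_finset_zero
    intro i hi
    rw [hc i hi, zero_smul]
  have heq := hrep.unique hfin
  have hmem : MemLp (fun p => ∑ i ∈ Finset.HasAntidiagonal.antidiagonal ℓ,
      (cf v i * (nrm i)⁻¹) * phi i.1 i.2 p) 2 :=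
    memLp_finsetSum _ (fun i _ => (phi_memLp i.1 i.2).const_mul _)
  have heq2 : hv.toLp v = hmem.toLp _ := by
    rw [heq]
    rw [Lp.ext_iff]
    refine EventuallyEq.trans ?_ hmem.coeFn_toLp.symm
    refine (Lp.coeFn_finsetSum _ _).trans ?_
    have : ∀ i : ℕ × ℕ, ∀ᵐ p, (cf v i • ebas i : Lp ℝ 2 (volume : Measure (ℝ × ℝ))) p
        = (cf v i * (nrm i)⁻¹) * phi i.1 i.2 p := by
      intro i
      rw [ebas, smul_smul]
      filter_upwards [Lp.coeFn_smul (cf v i * (nrm i)⁻¹) ((phi_memLp i.1 i.2).toLp (phi i.1 i.2)),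
        (phi_memLp i.1 i.2).coeFn_toLp] with p h1 h2
      rw [h1, Pi.smul_apply, h2, smul_eq_mul]
    filter_upwards [ae_all_iff.2 this] with p hp
    simp [hp]
  have hae := (MemLp.toLp_eq_toLp_iff hv hmem).1 heq2
  have hcont : Continuous (fun p => ∑ i ∈ Finset.HasAntidiagonal.antidiagonal ℓ,
      (cf v i * (nrm i)⁻¹) * phi i.1 i.2 p) :=
    continuous_finsetSum _ (fun i _ => (phi_cont i.1 i.2).const_mul _)
  have := (hvc.ae_eq_iff_eq volume hcont).1 hae
  exact ⟨fun i => cf v i * (nrm i)⁻¹, fun p => congrFun this p⟩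

noncomputable def uu (ℓ : ℕ) (c : ℕ × ℕ → ℝ) (p : ℝ × ℝ) : ℝ :=
  ∑ i ∈ Finset.HasAntidiagonal.antidiagonal ℓ, c i * phi i.1 i.2 p

noncomputable def uA (ℓ : ℕ) (c : ℕ × ℕ → ℝ) (p : ℝ × ℝ) : ℝ :=
  ∑ i ∈ Finset.HasAntidiagonal.antidiagonal ℓ, c i * (2 * (i.1 : ℝ)) * phi (i.1 - 1) i.2 p

noncomputable def uB (ℓ : ℕ) (c : ℕ × ℕ → ℝ) (p : ℝ × ℝ) : ℝ :=
  ∑ i ∈ Finset.HasAntidiagonal.antidiagonal ℓ, c i * (2 * (i.2 : ℝ)) * phi i.1 (i.2 - 1) p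

noncomputable def polX (ℓ : ℕ) (c : ℕ × ℕ → ℝ) (y : ℝ) : Polynomial ℝ :=
  ∑ i ∈ Finset.HasAntidiagonal.antidiagonal ℓ, Polynomial.C (c i * (H i.2).eval y) * H i.1

noncomputable def polY (ℓ : ℕ) (c : ℕ × ℕ → ℝ) (x : ℝ) : Polynomial ℝ :=
  ∑ i ∈ Finset.HasAntidiagonal.antidiagonal ℓ, Polynomial.C (c i * (H i.1).eval x) * H i.2

lemma uu_polX (ℓ : ℕ) (c : ℕ × ℕ → ℝ) (x y : ℝ) :
    uu ℓ c (x, y) = (polX ℓ c y).eval x * Real.exp (-(x ^ 2 + y ^ 2) / 2) := by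
  simp only [uu, polX, phi, Polynomial.eval_finsetSum, Finset.sum_mul, Polynomial.eval_mul,
    Polynomial.eval_C]
  exact Finset.sum_congr rfl fun i _ => by ring

lemma uA_polX (ℓ : ℕ) (c : ℕ × ℕ → ℝ) (x y : ℝ) :
    uA ℓ c (x, y) = (Polynomial.derivative (polX ℓ c y)).eval x
      * Real.exp (-(x ^ 2 + y ^ 2) / 2) := by
  simp only [uA, polX, phi, Polynomial.derivative_sum, Polynomial.derivative_C_mul, H_deriv,
    Polynomial.eval_finsetSum, Finset.sum_mul, Polynomial.eval_mul, Polynomial.eval_C]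
  exact Finset.sum_congr rfl fun i _ => by ring

lemma uu_polY (ℓ : ℕ) (c : ℕ × ℕ → ℝ) (x y : ℝ) :
    uu ℓ c (x, y) = (polY ℓ c x).eval y * Real.exp (-(x ^ 2 + y ^ 2) / 2) := by
  simp only [uu, polY, phi, Polynomial.eval_finsetSum, Finset.sum_mul, Polynomial.eval_mul,
    Polynomial.eval_C]
  exact Finset.sum_congr rfl fun i _ => by ring

lemma uB_polY (ℓ : ℕ) (c : ℕ × ℕ → ℝ) (x y : ℝ) :
    uB ℓ c (x, y) = (Polynomial.derivative (polY ℓ c x)).eval y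
      * Real.exp (-(x ^ 2 + y ^ 2) / 2) := by
  simp only [uB, polY, phi, Polynomial.derivative_sum, Polynomial.derivative_C_mul, H_deriv,
    Polynomial.eval_finsetSum, Finset.sum_mul, Polynomial.eval_mul, Polynomial.eval_C]
  exact Finset.sum_congr rfl fun i _ => by ring

lemma uu_memLp (ℓ : ℕ) (c : ℕ × ℕ → ℝ) : MemLp (uu ℓ c) 2 :=
  memLp_finsetSum _ (fun i _ => (phi_memLp i.1 i.2).const_mul _)

lemma uA_memLp (ℓ : ℕ) (c : ℕ × ℕ → ℝ) : MemLp (uA ℓ c) 2 :=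
  memLp_finsetSum _ (fun i _ => (phi_memLp (i.1 - 1) i.2).const_mul _)

lemma uB_memLp (ℓ : ℕ) (c : ℕ × ℕ → ℝ) : MemLp (uB ℓ c) 2 :=
  memLp_finsetSum _ (fun i _ => (phi_memLp i.1 (i.2 - 1)).const_mul _)

lemma uu_cont (ℓ : ℕ) (c : ℕ × ℕ → ℝ) : Continuous (uu ℓ c) :=
  continuous_finsetSum _ (fun i _ => (phi_cont i.1 i.2).const_mul _)

lemma bdd_memLp {g f : ℝ × ℝ → ℝ} {C : ℝ} (hg : Measurable g) (hC : ∀ p, |g p| ≤ C)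
    (hf : MemLp f 2) : MemLp (fun p => g p * f p) 2 := by
  refine hf.of_le_mul (c := C) (hg.aestronglyMeasurable.mul hf.1) (Eventually.of_forall fun p => ?_)
  rw [norm_mul]
  exact mul_le_mul_of_nonneg_right (hC p) (norm_nonneg _)

lemma exp_sq (x y : ℝ) : Real.exp (-(x ^ 2 + y ^ 2) / 2) * Real.exp (-(x ^ 2 + y ^ 2) / 2)
    = Real.exp (-1 * x ^ 2) * Real.exp (-1 * y ^ 2) := by
  rw [← Real.exp_add, ← Real.exp_add]; congr 1; ring

lemma weakX (ℓ : ℕ) (c : ℕ × ℕ → ℝ) (g : ℝ × ℝ → ℝ) (C : ℝ) (hg : Measurable g)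
    (hC : ∀ p, |g p| ≤ C) (hloc : ∀ p, uu ℓ c p ≠ 0 → ∀ᶠ q in 𝓝 p, g q = g p) (m n : ℕ) :
    ∫ p, (g p * uA ℓ c p) * phi m n p = ∫ p, (g p * uu ℓ c p) * phi (m + 1) n p := by
  have i1 : Integrable (fun p => (g p * uA ℓ c p) * phi m n p) :=
    (bdd_memLp hg hC (uA_memLp ℓ c)).integrable_mul (phi_memLp m n)
  have i2 : Integrable (fun p => (g p * uu ℓ c p) * phi (m + 1) n p) :=
    (bdd_memLp hg hC (uu_memLp ℓ c)).integrable_mul (phi_memLp (m + 1) n)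
  rw [← sub_eq_zero, ← integral_sub i1 i2]
  have i3 := i1.sub i2
  rw [Measure.volume_eq_prod] at i3 ⊢
  refine (integral_prod_symm _ i3).trans ?_
  have hz : ∀ y : ℝ, ∫ x : ℝ, ((fun p => (g p * uA ℓ c p) * phi m n p) -
      (fun p => (g p * uu ℓ c p) * phi (m + 1) n p)) (x, y) = 0 := by
    intro y
    have h := ibp_line (polX ℓ c y) (H m) (fun x => g (x, y)) C
      (hg.comp (by fun_prop)) (fun x => hC _) (by
        intro x hx
        have h1 := hloc (x, y) (by
          rw [uu_polX]; exact mul_ne_zero hx (Real.exp_pos _).ne')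
        have h2 : Continuous (fun z : ℝ => (z, y)) := by fun_prop
        exact h2.continuousAt.eventually h1)
    have e : (fun x : ℝ => ((fun p => (g p * uA ℓ c p) * phi m n p) -
      (fun p => (g p * uu ℓ c p) * phi (m + 1) n p)) (x, y)) = fun x =>
        ((H n).eval y * Real.exp (-1 * y ^ 2)) * (g (x, y) *
        ((Polynomial.derivative (polX ℓ c y) * H m + polX ℓ c y *
          (Polynomial.derivative (H m) - Polynomial.C 2 * Polynomial.X * H m)).eval x
          * Real.exp (-1 * x ^ 2))) := by
      funext x
      have e2 := exp_sq x y
      rw [H_deriv_rel m]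
      simp only [Pi.sub_apply, uA_polX, uu_polX, phi, Polynomial.eval_add, Polynomial.eval_sub,
        Polynomial.eval_mul, Polynomial.eval_C, Polynomial.eval_X]
      linear_combination (g (x, y) * (H n).eval y * ((Polynomial.derivative (polX ℓ c y)).eval x
        * (H m).eval x - (polX ℓ c y).eval x * (H (m + 1)).eval x)) * e2
    rw [e, integral_const_mul, h, mul_zero]
  refine (integral_congr_ae (Eventually.of_forall hz)).trans ?_
  simp

lemma weakY (ℓ : ℕ) (c : ℕ × ℕ → ℝ) (g : ℝ × ℝ → ℝ) (C : ℝ) (hg : Measurable g)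
    (hC : ∀ p, |g p| ≤ C) (hloc : ∀ p, uu ℓ c p ≠ 0 → ∀ᶠ q in 𝓝 p, g q = g p) (m n : ℕ) :
    ∫ p, (g p * uB ℓ c p) * phi m n p = ∫ p, (g p * uu ℓ c p) * phi m (n + 1) p := by
  have i1 : Integrable (fun p => (g p * uB ℓ c p) * phi m n p) :=
    (bdd_memLp hg hC (uB_memLp ℓ c)).integrable_mul (phi_memLp m n)
  have i2 : Integrable (fun p => (g p * uu ℓ c p) * phi m (n + 1) p) :=
    (bdd_memLp hg hC (uu_memLp ℓ c)).integrable_mul (phi_memLp m (n + 1))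
  rw [← sub_eq_zero, ← integral_sub i1 i2]
  have i3 := i1.sub i2
  rw [Measure.volume_eq_prod] at i3 ⊢
  refine (integral_prod _ i3).trans ?_
  have hz : ∀ x : ℝ, ∫ y : ℝ, ((fun p => (g p * uB ℓ c p) * phi m n p) -
      (fun p => (g p * uu ℓ c p) * phi m (n + 1) p)) (x, y) = 0 := by
    intro x
    have h := ibp_line (polY ℓ c x) (H n) (fun y => g (x, y)) C
      (hg.comp (by fun_prop)) (fun y => hC _) (by
        intro y hy
        have h1 := hloc (x, y) (by
          rw [uu_polY]; exact mul_ne_zero hy (Real.exp_pos _).ne')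
        have h2 : Continuous (fun z : ℝ => (x, z)) := by fun_prop
        exact h2.continuousAt.eventually h1)
    have e : (fun y : ℝ => ((fun p => (g p * uB ℓ c p) * phi m n p) -
      (fun p => (g p * uu ℓ c p) * phi m (n + 1) p)) (x, y)) = fun y =>
        ((H m).eval x * Real.exp (-1 * x ^ 2)) * (g (x, y) *
        ((Polynomial.derivative (polY ℓ c x) * H n + polY ℓ c x *
          (Polynomial.derivative (H n) - Polynomial.C 2 * Polynomial.X * H n)).eval y
          * Real.exp (-1 * y ^ 2))) := by
      funext y
      have e2 := exp_sq x y
      rw [H_deriv_rel n]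
      simp only [Pi.sub_apply, uB_polY, uu_polY, phi, Polynomial.eval_add, Polynomial.eval_sub,
        Polynomial.eval_mul, Polynomial.eval_C, Polynomial.eval_X]
      linear_combination (g (x, y) * (H m).eval x * ((Polynomial.derivative (polY ℓ c x)).eval y
        * (H n).eval y - (polY ℓ c x).eval y * (H (n + 1)).eval y)) * e2
    rw [e, integral_const_mul, h, mul_zero]
  refine (integral_congr_ae (Eventually.of_forall hz)).trans ?_
  simp

lemma energy (ℓ : ℕ) (c : ℕ × ℕ → ℝ) (g : ℝ × ℝ → ℝ) (C : ℝ) (hg : Measurable g)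
    (hC : ∀ p, |g p| ≤ C) (hloc : ∀ p, uu ℓ c p ≠ 0 → ∀ᶠ q in 𝓝 p, g q = g p) :
    (∫ p, (g p * uA ℓ c p) * (g p * uA ℓ c p)) + ∫ p, (g p * uB ℓ c p) * (g p * uB ℓ c p)
      = 2 * ℓ * ∫ p, (g p * uu ℓ c p) * (g p * uu ℓ c p) := by
  set G : ℝ × ℝ → ℝ := fun p => g p * g p with hG
  have hGm : Measurable G := hg.mul hg
  have hGC : ∀ p, |G p| ≤ C * C := by
    intro p
    rw [hG]; simp only [abs_mul]
    exact mul_le_mul (hC p) (hC p) (abs_nonneg _) ((abs_nonneg _).trans (hC p))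
  have hGl : ∀ p, uu ℓ c p ≠ 0 → ∀ᶠ q in 𝓝 p, G q = G p := by
    intro p hp
    filter_upwards [hloc p hp] with q hq
    simp only [hG, hq]
  have mA := bdd_memLp hGm hGC (uA_memLp ℓ c)
  have mB := bdd_memLp hGm hGC (uB_memLp ℓ c)
  have mU := bdd_memLp hGm hGC (uu_memLp ℓ c)
  have eA : ∫ p, (g p * uA ℓ c p) * (g p * uA ℓ c p) =
      ∑ i ∈ Finset.HasAntidiagonal.antidiagonal ℓ, c i * (2 * (i.1 : ℝ)) *
        ∫ p, (G p * uu ℓ c p) * phi i.1 i.2 p := by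
    have e : (fun p => (g p * uA ℓ c p) * (g p * uA ℓ c p)) = fun p =>
        ∑ i ∈ Finset.HasAntidiagonal.antidiagonal ℓ, c i * (2 * (i.1 : ℝ)) *
          ((G p * uA ℓ c p) * phi (i.1 - 1) i.2 p) := by
      funext p
      have : (g p * uA ℓ c p) * (g p * uA ℓ c p) = (G p * uA ℓ c p) * uA ℓ c p := by
        simp only [hG]; ring
      rw [this]
      conv_lhs => rw [uA.eq_def ℓ c p]
      rw [← uA.eq_def ℓ c p, uA.eq_def ℓ c p, Finset.mul_sum]
      exact Finset.sum_congr rfl fun i _ => by ring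
    rw [e, integral_finsetSum _ (fun i _ =>
      (mA.integrable_mul (phi_memLp (i.1 - 1) i.2)).const_mul _)]
    refine Finset.sum_congr rfl fun i _ => ?_
    rw [integral_const_mul]
    rcases Nat.eq_zero_or_pos i.1 with h | h
    · simp [h]
    · rw [weakX ℓ c G _ hGm hGC hGl, Nat.sub_add_cancel h]
  have eB : ∫ p, (g p * uB ℓ c p) * (g p * uB ℓ c p) =
      ∑ i ∈ Finset.HasAntidiagonal.antidiagonal ℓ, c i * (2 * (i.2 : ℝ)) *
        ∫ p, (G p * uu ℓ c p) * phi i.1 i.2 p := by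
    have e : (fun p => (g p * uB ℓ c p) * (g p * uB ℓ c p)) = fun p =>
        ∑ i ∈ Finset.HasAntidiagonal.antidiagonal ℓ, c i * (2 * (i.2 : ℝ)) *
          ((G p * uB ℓ c p) * phi i.1 (i.2 - 1) p) := by
      funext p
      have : (g p * uB ℓ c p) * (g p * uB ℓ c p) = (G p * uB ℓ c p) * uB ℓ c p := by
        simp only [hG]; ring
      rw [this, uB.eq_def ℓ c p, Finset.mul_sum]
      exact Finset.sum_congr rfl fun i _ => by ring
    rw [e, integral_finsetSum _ (fun i _ =>
      (mB.integrable_mul (phi_memLp i.1 (i.2 - 1))).const_mul _)]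
    refine Finset.sum_congr rfl fun i _ => ?_
    rw [integral_const_mul]
    rcases Nat.eq_zero_or_pos i.2 with h | h
    · simp [h]
    · rw [weakY ℓ c G _ hGm hGC hGl, Nat.sub_add_cancel h]
  have eU : ∫ p, (g p * uu ℓ c p) * (g p * uu ℓ c p) =
      ∑ i ∈ Finset.HasAntidiagonal.antidiagonal ℓ, c i *
        ∫ p, (G p * uu ℓ c p) * phi i.1 i.2 p := by
    have e : (fun p => (g p * uu ℓ c p) * (g p * uu ℓ c p)) = fun p =>
        ∑ i ∈ Finset.HasAntidiagonal.antidiagonal ℓ, c i *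
          ((G p * uu ℓ c p) * phi i.1 i.2 p) := by
      funext p
      have : (g p * uu ℓ c p) * (g p * uu ℓ c p) = (G p * uu ℓ c p) * uu ℓ c p := by
        simp only [hG]; ring
      rw [this, uu.eq_def ℓ c p, Finset.mul_sum]
      exact Finset.sum_congr rfl fun i _ => by ring
    rw [e, integral_finsetSum _ (fun i _ =>
      (mU.integrable_mul (phi_memLp i.1 i.2)).const_mul _)]
    exact Finset.sum_congr rfl fun i _ => integral_const_mul _ _
  rw [eA, eB, eU, ← Finset.sum_add_distrib, Finset.mul_sum]
  refine Finset.sum_congr rfl fun i hi => ?_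
  rw [Finset.HasAntidiagonal.mem_antidiagonal] at hi
  rw [← hi]; push_cast; ring

lemma mem_eigenspace_rep (ℓ : ℕ) (u : ℝ × ℝ → ℝ) (hu : u ∈ eigenspace ℓ) :
    ∃ c : ℕ × ℕ → ℝ, u = uu ℓ c := by
  rw [eigenspace] at hu
  induction hu using Submodule.span_induction with
  | mem f hf =>
    obtain ⟨j, hj, rfl⟩ := hf
    refine ⟨fun i => if i = (ℓ - j, j) then 1 else 0, ?_⟩
    funext p
    have : (ℓ - j, j) ∈ Finset.HasAntidiagonal.antidiagonal ℓ := by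
      rw [Finset.HasAntidiagonal.mem_antidiagonal]; exact Nat.sub_add_cancel hj
    simp only [uu, ite_mul, one_mul, zero_mul, Finset.sum_ite_eq', this, if_true]
  | zero => exact ⟨fun _ => 0, by funext p; simp [uu]⟩
  | add f g _ _ hf hg =>
    obtain ⟨c, rfl⟩ := hf
    obtain ⟨d, rfl⟩ := hg
    exact ⟨fun i => c i + d i, by funext p; simp [uu, add_mul, Finset.sum_add_distrib]⟩
  | smul a f _ hf =>
    obtain ⟨c, rfl⟩ := hf
    exact ⟨fun i => a * c i, by funext p; simp [uu, mul_assoc, Finset.mul_sum]⟩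

lemma exists_comb {α κ : Type*} (T : Finset α) (K : Finset κ) (h : K.card < T.card)
    (M : κ → α → ℝ) : ∃ a : α → ℝ, (∃ t ∈ T, a t ≠ 0) ∧ ∀ k ∈ K, ∑ t ∈ T, a t * M k t = 0 := by
  classical
  let f : (T → ℝ) →ₗ[ℝ] (K → ℝ) :=
    { toFun := fun a k => ∑ t : T, a t * M k t
      map_add' := by
        intro a b; funext k; simp [add_mul, Finset.sum_add_distrib]
      map_smul' := by
        intro r a; funext k; simp [mul_assoc, Finset.mul_sum] }
  have hker : LinearMap.ker f ≠ ⊥ := by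
    apply LinearMap.ker_ne_bot_of_finrank_lt
    simpa using h
  obtain ⟨a, ha, ha0⟩ := (Submodule.ne_bot_iff _).1 hker
  obtain ⟨t, ht⟩ := Function.ne_iff.1 ha0
  refine ⟨fun x => if hx : x ∈ T then a ⟨x, hx⟩ else 0, ⟨t, t.2, by simpa using ht⟩, ?_⟩
  intro k hk
  have h1 := congrFun (LinearMap.mem_ker.1 ha) ⟨k, hk⟩
  have h2 : ∑ t : T, a t * M k t = 0 := h1
  rw [← h2, ← Finset.sum_attach T]
  refine Finset.sum_congr rfl fun x _ => ?_
  simp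

lemma card_low (ℓ : ℕ) : ((Finset.range ℓ).biUnion
    (fun k => Finset.HasAntidiagonal.antidiagonal k) : Finset (ℕ × ℕ)).card ≤ ℓ * (ℓ + 1) / 2 := by
  refine Finset.card_biUnion_le.trans ?_
  simp only [Finset.Nat.card_antidiagonal]
  have : ∀ n : ℕ, 2 * ∑ k ∈ Finset.range n, (k + 1) = n * (n + 1) := by
    intro n
    induction n with
    | zero => simp
    | succ n ih => rw [Finset.sum_range_succ, mul_add, ih]; ring
  have := this ℓ
  omega

lemma uu_analytic (ℓ : ℕ) (c : ℕ × ℕ → ℝ) : AnalyticOnNhd ℝ (uu ℓ c) Set.univ := by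
  have hp : ∀ (q : Polynomial ℝ) (f : ℝ × ℝ → ℝ), AnalyticOnNhd ℝ f Set.univ →
      AnalyticOnNhd ℝ (fun p => q.eval (f p)) Set.univ := by
    intro q f hf
    have := hf.aeval_polynomial q
    simpa using this
  have h1 : AnalyticOnNhd ℝ (fun p : ℝ × ℝ => p.1) Set.univ := analyticOnNhd_fst
  have h2 : AnalyticOnNhd ℝ (fun p : ℝ × ℝ => p.2) Set.univ := analyticOnNhd_snd
  have h3 : AnalyticOnNhd ℝ (fun p : ℝ × ℝ => Real.exp (-(p.1 ^ 2 + p.2 ^ 2) / 2)) Set.univ := by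
    intro p _
    have := h1 p trivial
    have := h2 p trivial
    fun_prop
  intro p hpu
  change AnalyticAt ℝ (fun p => ∑ i ∈ Finset.HasAntidiagonal.antidiagonal ℓ,
    c i * phi i.1 i.2 p) p
  refine Finset.analyticAt_fun_sum _ fun i _ => ?_
  exact analyticAt_const.mul (((hp _ _ h1 p hpu).mul (hp _ _ h2 p hpu)).mul (h3 p hpu))

theorem courant_bound (ℓ : ℕ) (u : ℝ × ℝ → ℝ) (hu : u ∈ eigenspace ℓ) (hu0 : u ≠ 0) :
    mu u ≤ ℓ * (ℓ + 1) / 2 + 1 := by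
  classical
  obtain ⟨c, rfl⟩ := mem_eigenspace_rep ℓ u hu
  by_contra hcon
  push Not at hcon
  set W : Set (ℝ × ℝ) := {q | uu ℓ c q ≠ 0} with hW
  have hWo : IsOpen W := isOpen_ne_fun (uu_cont ℓ c) continuous_const
  set S : Set (Set (ℝ × ℝ)) := {D | ∃ p, uu ℓ c p ≠ 0 ∧ D = connectedComponentIn W p} with hS
  have hcard : ℓ * (ℓ + 1) / 2 + 1 < S.ncard := hcon
  have hSfin : S.Finite := Set.finite_of_ncard_pos (by omega)
  have hne : S.Nonempty := Set.nonempty_of_ncard_ne_zero (by omega)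
  obtain ⟨D0, hD0⟩ := hne
  set T : Finset (Set (ℝ × ℝ)) := hSfin.toFinset.erase D0 with hT
  have hTS : ∀ D ∈ T, D ∈ S := fun D hD => by
    rw [hT, Finset.mem_erase, Set.Finite.mem_toFinset] at hD; exact hD.2
  have hD0T : D0 ∉ T := by simp [hT]
  have hTcard : ℓ * (ℓ + 1) / 2 < T.card := by
    rw [hT, Finset.card_erase_of_mem (by simpa using hD0), ← Set.ncard_eq_toFinset_card S hSfin]
    omega
  have hSopen : ∀ D ∈ S, IsOpen D := by
    rintro D ⟨p, _, rfl⟩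
    exact hWo.connectedComponentIn
  have hSW : ∀ D ∈ S, D ⊆ W := by
    rintro D ⟨p, _, rfl⟩
    exact connectedComponentIn_subset _ _
  have hSne : ∀ D ∈ S, D.Nonempty := by
    rintro D ⟨p, hp, rfl⟩
    exact ⟨p, mem_connectedComponentIn hp⟩
  have hSeq : ∀ D ∈ S, ∀ p ∈ D, D = connectedComponentIn W p := by
    rintro D ⟨p, hp, rfl⟩ q hq
    exact connectedComponentIn_eq hq
  have hSdisj : ∀ D ∈ S, ∀ D' ∈ S, ∀ p, p ∈ D → p ∈ D' → D = D' := by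
    intro D hD D' hD' p hp hp'
    rw [hSeq D hD p hp, ← hSeq D' hD' p hp']
  obtain ⟨a, ⟨t, htT, hat⟩, hak⟩ := exists_comb T _ (lt_of_le_of_lt (card_low ℓ) hTcard)
    (fun (k : ℕ × ℕ) (D : Set (ℝ × ℝ)) =>
      ∫ p, (D.indicator (fun _ => (1 : ℝ)) p * uu ℓ c p) * phi k.1 k.2 p)
  set g : ℝ × ℝ → ℝ := fun p => ∑ D ∈ T, a D * D.indicator (fun _ => (1 : ℝ)) p with hg
  have hind : ∀ D ∈ S, Measurable (D.indicator (fun _ => (1 : ℝ))) := fun D hD =>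
    measurable_const.indicator (hSopen D hD).measurableSet
  have hind1 : ∀ D : Set (ℝ × ℝ), ∀ p, |D.indicator (fun _ => (1 : ℝ)) p| ≤ 1 := by
    intro D p
    by_cases hp : p ∈ D <;> simp [hp]
  have hgm : Measurable g :=
    Finset.measurable_fun_sum _ fun D hD => (hind D (hTS D hD)).const_mul _
  have hgC : ∀ p, |g p| ≤ ∑ D ∈ T, |a D| := by
    intro p
    refine (Finset.abs_sum_le_sum_abs _ _).trans (Finset.sum_le_sum fun D _ => ?_)
    rw [abs_mul]
    exact mul_le_of_le_one_right (abs_nonneg _) (hind1 D p)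
  have hgloc : ∀ p, uu ℓ c p ≠ 0 → ∀ᶠ q in 𝓝 p, g q = g p := by
    intro p hp
    have hpS : connectedComponentIn W p ∈ S := ⟨p, hp, rfl⟩
    have hpm : p ∈ connectedComponentIn W p := mem_connectedComponentIn hp
    filter_upwards [(hSopen _ hpS).mem_nhds hpm] with q hq
    refine Finset.sum_congr rfl fun D hD => ?_
    by_cases hDp : p ∈ D
    · have : D = connectedComponentIn W p := hSeq D (hTS D hD) p hDp
      have hqD : q ∈ D := this ▸ hq
      simp [hDp, hqD]
    · have hqD : q ∉ D := by
        intro hqD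
        have := hSdisj D (hTS D hD) _ hpS q hqD hq
        exact hDp (this ▸ hpm)
      simp [hDp, hqD]
  have hvc : Continuous (fun p => g p * uu ℓ c p) := by
    rw [continuous_iff_continuousAt]
    intro p
    by_cases hp : uu ℓ c p = 0
    · rw [ContinuousAt, hp, mul_zero]
      have h1 : Continuous (fun q => (∑ D ∈ T, |a D|) * ‖uu ℓ c q‖) :=
        (uu_cont ℓ c).norm.const_mul _
      have h2 := h1.tendsto p
      simp only [hp, norm_zero, mul_zero] at h2
      apply squeeze_zero_norm _ h2
      intro q
      rw [norm_mul]
      exact mul_le_mul_of_nonneg_right (hgC q) (norm_nonneg _)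
    · have h1 : (fun q => g q * uu ℓ c q) =ᶠ[𝓝 p] fun q => g p * uu ℓ c q := by
        filter_upwards [hgloc p hp] with q hq
        rw [hq]
      exact ContinuousAt.congr ((uu_cont ℓ c).const_mul _).continuousAt h1.symm
  have horth : ∀ m n, m + n < ℓ → ∫ p, (g p * uu ℓ c p) * phi m n p = 0 := by
    intro m n hmn
    have hk := hak (m, n) (by
      rw [Finset.mem_biUnion]
      exact ⟨m + n, Finset.mem_range.2 hmn, by
        rw [Finset.HasAntidiagonal.mem_antidiagonal]⟩)
    have e : (fun p => (g p * uu ℓ c p) * phi m n p) = fun p => ∑ D ∈ T, a D *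
        ((D.indicator (fun _ => (1 : ℝ)) p * uu ℓ c p) * phi m n p) := by
      funext p
      simp only [hg, Finset.sum_mul]
      exact Finset.sum_congr rfl fun D _ => by ring
    have hi : ∀ D ∈ T, Integrable (fun p => a D *
        ((D.indicator (fun _ => (1 : ℝ)) p * uu ℓ c p) * phi m n p)) := fun D hD =>
      ((bdd_memLp (hind D (hTS D hD)) (hind1 D)
        (uu_memLp ℓ c)).integrable_mul (phi_memLp m n)).const_mul _
    rw [e, integral_finsetSum _ hi]
    simp only [integral_const_mul]
    exact hk
  obtain ⟨d, hd⟩ := spectral ℓ (fun p => g p * uu ℓ c p) (fun p => g p * uA ℓ c p)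
    (fun p => g p * uB ℓ c p) (bdd_memLp hgm hgC (uu_memLp ℓ c)) (bdd_memLp hgm hgC (uA_memLp ℓ c))
    (bdd_memLp hgm hgC (uB_memLp ℓ c)) hvc (weakX ℓ c g _ hgm hgC hgloc)
    (weakY ℓ c g _ hgm hgC hgloc) (energy ℓ c g _ hgm hgC hgloc) horth
  have hd' : ∀ p, g p * uu ℓ c p = uu ℓ d p := hd
  obtain ⟨p0, hp0⟩ := hSne D0 hD0
  have hzero : uu ℓ d =ᶠ[𝓝 p0] 0 := by
    filter_upwards [(hSopen D0 hD0).mem_nhds hp0] with q hq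
    have : g q = 0 := by
      refine Finset.sum_eq_zero fun D hD => ?_
      have : q ∉ D := fun hqD => hD0T (hSdisj D (hTS D hD) D0 hD0 q hqD hq ▸ hD)
      simp [this]
    rw [← hd', this]; simp
  have hall : uu ℓ d = 0 :=
    (uu_analytic ℓ d).eq_of_eventuallyEq (g := 0) (fun _ _ => analyticAt_const) hzero
  obtain ⟨q, hq⟩ := hSne t (hTS t htT)
  have hgq : g q = a t := by
    have : g q = a t * t.indicator (fun _ => (1 : ℝ)) q := by
      refine Finset.sum_eq_single t (fun D hD hDt => ?_) (fun h => absurd htT h)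
      have : q ∉ D := fun hqD => hDt (hSdisj D (hTS D hD) t (hTS t htT) q hqD hq)
      simp [this]
    rw [this]; simp [hq]
  have h1 := hd' q
  rw [hall, hgq, Pi.zero_apply] at h1
  rcases mul_eq_zero.1 h1 with h2 | h2
  · exact hat h2
  · exact hSW t (hTS t htT) hq h2
end
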